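/- arXiv:1910.10452 — 6 statements merged into one kernel-verified Lean document; each statement's English description precedes it below -/
import Mathlib

section
/- Let X, Y, Z be Banach spaces, J a compact interval, and Y₀ a Banach space equipped with a continuous linear injection j : Y₀ → Y. Suppose S : J → B(X,Y₀) is strongly continuous and t ↦ j ∘ S(t) is strongly continuously differentiable in B(X,Y) with strong derivative S'(t) ∈ B(X,Y). Suppose R : J → B(Y,Z) is strongly continuous and t ↦ R(t) ∘ j is strongly continuously differentiable in B(Y₀,Z) with strong derivative R'(t) ∈ B(Y₀,Z). Then t ↦ R(t) ∘ j ∘ S(t) is strongly continuously differentiable in B(X,Z), with strong derivative R'(t) ∘ S(t) + R(t) ∘ S'(t). -/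
open Set

/-!
Let `f : 𝕜 → Y` be differentiable at `t` within `s` and let `R u : Y →L[𝕜] Z` be strongly
continuous. The product rule is the limit `u → t` of

  `slope (fun u ↦ R u (f u)) t u = slope (fun u ↦ R u (f t)) t u + R u (slope f t u)`,

where in the last term both the operator and its argument vary. That term converges because, by
Banach–Steinhaus, strong convergence of operators along a sequence bounds their norms. Continuity
of the derivative `R' t (S t x) + R t (S' t x)` rests on the same fact. Only sequences are needed,
since neighborhood filters in `𝕜` are countably generated.
-/

open Filter Topology

section StrongConvergence

variable {𝕜 𝕜₂ E F ι : Type*} [NontriviallyNormedField 𝕜] [NontriviallyNormedField 𝕜₂]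
  [SeminormedAddCommGroup E] [SeminormedAddCommGroup F] [NormedSpace 𝕜 E] [NormedSpace 𝕜₂ F]
  {σ : 𝕜 →+* 𝕜₂} [RingHomIsometric σ] {T : ι → E →SL[σ] F} {f : ι → E} {y : E} {l : Filter ι}

theorem tendsto_clm_apply_of_isBoundedUnder_norm {z : F}
    (hbdd : IsBoundedUnder (· ≤ ·) l (norm ∘ T)) (hT : Tendsto (fun i ↦ T i y) l (𝓝 z))
    (hf : Tendsto f l (𝓝 y)) : Tendsto (fun i ↦ T i (f i)) l (𝓝 z) := by
  have hdiff : Tendsto (fun i ↦ f i - y) l (𝓝 0) := tendsto_sub_nhds_zero_iff.2 hf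
  have herr : Tendsto (fun i ↦ T i (f i - y)) l (𝓝 0) :=
    hdiff.op_zero_isBoundedUnder_le hbdd (fun v (A : E →SL[σ] F) ↦ A v) fun v A ↦
      (A.le_opNorm v).trans_eq (mul_comm _ _)
  simpa only [map_sub, sub_add_cancel, zero_add] using herr.add hT

variable [CompleteSpace E]

theorem bddAbove_range_norm_of_forall_tendsto {T : ℕ → E →SL[σ] F} {L : E → F}
    (hT : ∀ y, Tendsto (fun n ↦ T n y) atTop (𝓝 (L y))) : BddAbove (range fun n ↦ ‖T n‖) := by
  obtain ⟨C, hC⟩ := banach_steinhaus (g := T) fun y ↦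
    (hT y).norm.bddAbove_range.imp fun _ ↦ forall_mem_range.1
  exact ⟨C, forall_mem_range.2 hC⟩

theorem tendsto_clm_apply_of_forall_tendsto [l.IsCountablyGenerated] {L : E → F}
    (hT : ∀ y, Tendsto (fun i ↦ T i y) l (𝓝 (L y))) (hf : Tendsto f l (𝓝 y)) :
    Tendsto (fun i ↦ T i (f i)) l (𝓝 (L y)) :=
  tendsto_of_seq_tendsto fun u hu ↦
    have hTu : ∀ y, Tendsto (fun n ↦ T (u n) y) atTop (𝓝 (L y)) := fun y ↦ (hT y).comp hu
    tendsto_clm_apply_of_isBoundedUnder_norm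
      (bddAbove_range_norm_of_forall_tendsto hTu).isBoundedUnder_of_range (hTu y) (hf.comp hu)

theorem continuousOn_clm_apply_of_forall_continuousOn [TopologicalSpace ι]
    [FirstCountableTopology ι] {s : Set ι} (hT : ∀ y, ContinuousOn (fun i ↦ T i y) s)
    (hf : ContinuousOn f s) : ContinuousOn (fun i ↦ T i (f i)) s :=
  fun i hi ↦ tendsto_clm_apply_of_forall_tendsto (fun y ↦ hT y i hi) (hf i hi)

end StrongConvergence

section ProductRule

variable {𝕜 Y Z : Type*} [NontriviallyNormedField 𝕜]
  [NormedAddCommGroup Y] [NormedSpace 𝕜 Y] [NormedAddCommGroup Z] [NormedSpace 𝕜 Z]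
  {R : 𝕜 → Y →L[𝕜] Z} {s : Set 𝕜}

theorem slope_clm_apply (R : 𝕜 → Y →L[𝕜] Z) (f : 𝕜 → Y) (t u : 𝕜) :
    slope (fun v ↦ R v (f v)) t u = slope (fun v ↦ R v (f t)) t u + R u (slope f t u) := by
  simp only [slope_def_module, map_smul, map_sub, ← smul_add, sub_add_sub_cancel']

variable [CompleteSpace Y]

theorem hasDerivWithinAt_clm_apply_of_forall_continuousWithinAt {f : 𝕜 → Y} {f' : Y} {z : Z}
    {t : 𝕜} (hR : ∀ y, ContinuousWithinAt (fun u ↦ R u y) s t)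
    (hRf : HasDerivWithinAt (fun u ↦ R u (f t)) z s t) (hf : HasDerivWithinAt f f' s t) :
    HasDerivWithinAt (fun u ↦ R u (f u)) (z + R t f') s t := by
  rw [hasDerivWithinAt_iff_tendsto_slope] at hRf hf ⊢
  have hRslope : Tendsto (fun u ↦ R u (slope f t u)) (𝓝[s \ {t}] t) (𝓝 (R t f')) :=
    tendsto_clm_apply_of_forall_tendsto (fun y ↦ (hR y).mono sdiff_subset) hf
  exact (hRf.add hRslope).congr fun u ↦ (slope_clm_apply R f t u).symm

theorem statement4_general {Y₀ : Type*} [NormedAddCommGroup Y₀] [NormedSpace 𝕜 Y₀]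
    [CompleteSpace Y₀] {j : Y₀ → Y} {f : 𝕜 → Y₀} {f' : 𝕜 → Y} {R' : 𝕜 → Y₀ →L[𝕜] Z}
    (hf : ContinuousOn f s)
    (hf' : ∀ t ∈ s, HasDerivWithinAt (fun u ↦ j (f u)) (f' t) s t)
    (hf'cont : ContinuousOn f' s)
    (hR : ∀ y, ContinuousOn (fun t ↦ R t y) s)
    (hR' : ∀ y₀, ∀ t ∈ s, HasDerivWithinAt (fun u ↦ R u (j y₀)) (R' t y₀) s t)
    (hR'cont : ∀ y₀, ContinuousOn (fun t ↦ R' t y₀) s) :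
    (∀ t ∈ s, HasDerivWithinAt (fun u ↦ R u (j (f u))) (R' t (f t) + R t (f' t)) s t) ∧
      ContinuousOn (fun t ↦ R' t (f t) + R t (f' t)) s :=
  ⟨fun t ht ↦ hasDerivWithinAt_clm_apply_of_forall_continuousWithinAt (fun y ↦ hR y t ht)
      (hR' (f t) t ht) (hf' t ht),
    (continuousOn_clm_apply_of_forall_continuousOn hR'cont hf).add
      (continuousOn_clm_apply_of_forall_continuousOn hR hf'cont)⟩

end ProductRule

/-- (Product rule for strong differentiation.) Let `X, Y, Z` be Banach spaces,
`J = [a,b]` a compact interval, and `Y₀` a Banach space with a continuous linear injection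
`j : Y₀ → Y`. Suppose `S : J → B(X,Y₀)` is strongly continuous and `t ↦ j ∘ S(t)` is strongly
continuously differentiable in `B(X,Y)` with strong derivative `S'(t) ∈ B(X,Y)`; suppose
`R : J → B(Y,Z)` is strongly continuous and `t ↦ R(t) ∘ j` is strongly continuously
differentiable in `B(Y₀,Z)` with strong derivative `R'(t) ∈ B(Y₀,Z)`. Then
`t ↦ R(t) ∘ j ∘ S(t)` is strongly continuously differentiable in `B(X,Z)` with strong
derivative `R'(t) ∘ S(t) + R(t) ∘ S'(t)`. -/
theorem statement4
    {X Y Z Y₀ : Type*}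
    [NormedAddCommGroup X] [NormedSpace ℝ X] [CompleteSpace X]
    [NormedAddCommGroup Y] [NormedSpace ℝ Y] [CompleteSpace Y]
    [NormedAddCommGroup Z] [NormedSpace ℝ Z] [CompleteSpace Z]
    [NormedAddCommGroup Y₀] [NormedSpace ℝ Y₀] [CompleteSpace Y₀]
    (a b : ℝ) (hab : a ≤ b)
    (j : Y₀ →L[ℝ] Y) (hj : Function.Injective j)
    (S : ℝ → X →L[ℝ] Y₀) (S' : ℝ → X →L[ℝ] Y)
    (R : ℝ → Y →L[ℝ] Z) (R' : ℝ → Y₀ →L[ℝ] Z)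
    (hScont : ∀ x : X, ContinuousOn (fun t => S t x) (Icc a b))
    (hSderiv : ∀ x : X, ∀ t ∈ Icc a b,
      HasDerivWithinAt (fun u => j (S u x)) (S' t x) (Icc a b) t)
    (hS'cont : ∀ x : X, ContinuousOn (fun t => S' t x) (Icc a b))
    (hRcont : ∀ y : Y, ContinuousOn (fun t => R t y) (Icc a b))
    (hRderiv : ∀ y₀ : Y₀, ∀ t ∈ Icc a b,
      HasDerivWithinAt (fun u => R u (j y₀)) (R' t y₀) (Icc a b) t)
    (hR'cont : ∀ y₀ : Y₀, ContinuousOn (fun t => R' t y₀) (Icc a b)) :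
    ∀ x : X, (∀ t ∈ Icc a b,
      HasDerivWithinAt (fun u => R u (j (S u x)))
        (R' t (S t x) + R t (S' t x)) (Icc a b) t) ∧
      ContinuousOn (fun t => R' t (S t x) + R t (S' t x)) (Icc a b) :=
  fun x ↦ statement4_general (hScont x) (hSderiv x) (hS'cont x) hRcont hRderiv hR'cont
end

section
/- Let X and Y be Banach spaces, J a compact interval, and S : J → B(X,Y) strongly continuously differentiable with strong derivative S'. If S(t) is invertible (a continuous linear isomorphism from X onto Y) for every t ∈ J, then the family t ↦ S(t)^{-1} is strongly continuously differentiable in B(Y,X), with strong derivative −S(t)^{-1} S'(t) S(t)^{-1}. -/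
open Set

/-!
By uniform boundedness, the difference quotients of `S` at `t`, which converge pointwise, are
bounded in operator norm, so `S` is norm continuous at `t`. Inversion is norm continuous, hence so
is `T = S⁻¹`, and one may pass to the limit in
`(T u - T t) / (u - t) = -T u ∘ ((S u - S t) / (u - t)) ∘ T t`. Uniform boundedness, now of `S'`
near `t`, also gives the continuity of `u ↦ S' u (T u y)`.
-/

open Filter Topology

section UniformBoundedness

variable {ι 𝕜 𝕜₂ E F : Type*} [NontriviallyNormedField 𝕜] [NontriviallyNormedField 𝕜₂]
  {σ : 𝕜 →+* 𝕜₂} [RingHomIsometric σ]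
  [SeminormedAddCommGroup E] [NormedSpace 𝕜 E] [CompleteSpace E]
  [SeminormedAddCommGroup F] [NormedSpace 𝕜₂ F]
  {l : Filter ι} [l.IsCountablyGenerated] {A : ι → E →SL[σ] F}

theorem isBoundedUnder_norm_of_forall_apply
    (hA : ∀ x, l.IsBoundedUnder (· ≤ ·) fun i => ‖A i x‖) :
    l.IsBoundedUnder (· ≤ ·) fun i => ‖A i‖ := by
  by_contra hunbdd
  obtain ⟨U, hU⟩ := l.exists_antitone_basis
  have hlarge (n : ℕ) : ∃ i ∈ U n, (n : ℝ) < ‖A i‖ := by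
    by_contra! hsmall
    exact hunbdd ⟨n, eventually_map.2 (mem_of_superset (hU.mem n) hsmall)⟩
  choose i hiU hi using hlarge
  have hil : Tendsto i atTop l := hU.tendsto hiU
  obtain ⟨C, hC⟩ : ∃ C, ∀ n, ‖A (i n)‖ ≤ C := by
    refine banach_steinhaus fun x => ?_
    have hbdd : atTop.IsBoundedUnder (· ≤ ·) fun n => ‖A (i n) x‖ := hil.isBoundedUnder_comp (hA x)
    obtain ⟨C, hC⟩ := hbdd.bddAbove_range
    exact ⟨C, fun n => hC (mem_range_self n)⟩
  obtain ⟨n, hn⟩ := exists_nat_gt C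
  exact (hn.trans (hi n)).not_ge (hC n)

theorem tendsto_apply_of_forall_tendsto_apply {B : E → F} {x : ι → E} {x₀ : E}
    (hA : ∀ v, Tendsto (fun i => A i v) l (𝓝 (B v))) (hx : Tendsto x l (𝓝 x₀)) :
    Tendsto (fun i => A i (x i)) l (𝓝 (B x₀)) := by
  obtain ⟨C, hC⟩ : l.IsBoundedUnder (· ≤ ·) fun i => ‖A i‖ :=
    isBoundedUnder_norm_of_forall_apply fun v => (hA v).norm.isBoundedUnder_le
  have hdiff : Tendsto (fun i => A i (x i - x₀)) l (𝓝 0) := by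
    have hbound : Tendsto (fun i => C * ‖x i - x₀‖) l (𝓝 0) := by
      simpa using (tendsto_iff_norm_sub_tendsto_zero.1 hx).const_mul C
    refine squeeze_zero_norm' ?_ hbound
    filter_upwards [eventually_map.1 hC] with i hi
    exact (A i).le_of_opNorm_le hi _
  simpa using hdiff.add (hA x₀)

end UniformBoundedness

section StrongDerivative

variable {𝕜 E F : Type*} [NontriviallyNormedField 𝕜]
  [NormedAddCommGroup E] [NormedSpace 𝕜 E] [NormedAddCommGroup F] [NormedSpace 𝕜 F]
  {S : 𝕜 → E →L[𝕜] F} {s : Set 𝕜} {t : 𝕜}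

theorem slope_clm_inverse_apply {u : 𝕜} (ht : (S t).IsInvertible) (hu : (S u).IsInvertible)
    (y : F) :
    slope (fun v => (S v).inverse y) t u =
      -(S u).inverse (slope (fun v => S v ((S t).inverse y)) t u) := by
  simp only [slope_def_module, map_smul, map_sub, hu.inverse_apply_self, ht.self_apply_inverse,
    ← smul_neg, neg_sub]

variable [CompleteSpace E]

theorem continuousWithinAt_clm_of_forall_differentiableWithinAt_apply
    (hS : ∀ x, DifferentiableWithinAt 𝕜 (fun u => S u x) s t) : ContinuousWithinAt S s t := by
  have hslope : (𝓝[s \ {t}] t).IsBoundedUnder (· ≤ ·) fun u => ‖slope S t u‖ := by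
    refine isBoundedUnder_norm_of_forall_apply fun x => ?_
    have hx := hasDerivWithinAt_iff_tendsto_slope.1 (hS x).hasDerivWithinAt
    exact hx.norm.isBoundedUnder_le
  have hsub : Tendsto (fun u => u - t) (𝓝[s \ {t}] t) (𝓝 0) :=
    tendsto_sub_nhds_zero_iff.2 (tendsto_id'.2 nhdsWithin_le_nhds)
  rw [← continuousWithinAt_sdiff_self, ContinuousWithinAt, ← tendsto_sub_nhds_zero_iff]
  simpa only [sub_smul_slope, vsub_eq_sub] using hsub.zero_smul_isBoundedUnder_le hslope

theorem continuousWithinAt_clm_inverse_of_forall_differentiableWithinAt_apply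
    (hS : ∀ x, DifferentiableWithinAt 𝕜 (fun u => S u x) s t) (hinv : (S t).IsInvertible) :
    ContinuousWithinAt (fun u => (S u).inverse) s t :=
  (hinv.contDiffAt_map_inverse (𝕜 := 𝕜) (n := 0)).continuousAt.comp_continuousWithinAt
    (continuousWithinAt_clm_of_forall_differentiableWithinAt_apply hS)

theorem hasDerivWithinAt_clm_inverse_apply {D : E → F}
    (hS : ∀ x, HasDerivWithinAt (fun u => S u x) (D x) s t) (hinv : (S t).IsInvertible) (y : F) :
    HasDerivWithinAt (fun u => (S u).inverse y) (-(S t).inverse (D ((S t).inverse y))) s t := by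
  have hdiff x : DifferentiableWithinAt 𝕜 (fun u => S u x) s t := (hS x).differentiableWithinAt
  have hpunctured : 𝓝[s \ {t}] t ≤ 𝓝[s] t := nhdsWithin_mono t sdiff_subset
  have hinv_near : ∀ᶠ u in 𝓝[s \ {t}] t, (S u).IsInvertible :=
    ((continuousWithinAt_clm_of_forall_differentiableWithinAt_apply hdiff).mono_left
      hpunctured).eventually (ContinuousLinearEquiv.isOpen.mem_nhds hinv)
  have hinverse : Tendsto (fun u => (S u).inverse) (𝓝[s \ {t}] t) (𝓝 (S t).inverse) :=
    (continuousWithinAt_clm_inverse_of_forall_differentiableWithinAt_apply hdiff hinv).mono_left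
      hpunctured
  have hslope := hasDerivWithinAt_iff_tendsto_slope.1 (hS ((S t).inverse y))
  have hcomp := (isBoundedBilinearMap_apply (𝕜 := 𝕜).continuous.tendsto _).comp
    (hinverse.prodMk_nhds hslope)
  refine hasDerivWithinAt_iff_tendsto_slope.2 (hcomp.neg.congr' ?_)
  filter_upwards [hinv_near] with u hu
  exact (slope_clm_inverse_apply hinv hu y).symm

theorem statement6_general {S' : 𝕜 → E →L[𝕜] F} {T : 𝕜 → F →L[𝕜] E}
    (hS : ∀ x, ∀ t ∈ s, HasDerivWithinAt (fun u => S u x) (S' t x) s t)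
    (hS' : ∀ x, ContinuousOn (fun t => S' t x) s)
    (hST : ∀ t ∈ s, (S t).comp (T t) = ContinuousLinearMap.id 𝕜 F)
    (hTS : ∀ t ∈ s, (T t).comp (S t) = ContinuousLinearMap.id 𝕜 E) (y : F) :
    (∀ t ∈ s, HasDerivWithinAt (fun u => T u y) (-(T t (S' t (T t y)))) s t) ∧
      ContinuousOn (fun t => -(T t (S' t (T t y)))) s := by
  have hinv t (ht : t ∈ s) : (S t).IsInvertible := .of_inverse (hST t ht) (hTS t ht)
  have hT t (ht : t ∈ s) : T t = (S t).inverse :=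
    (ContinuousLinearMap.inverse_eq (hST t ht) (hTS t ht)).symm
  have hTcont : ContinuousOn T s :=
    ContinuousOn.congr (fun t ht =>
      continuousWithinAt_clm_inverse_of_forall_differentiableWithinAt_apply
        (fun x => (hS x t ht).differentiableWithinAt) (hinv t ht)) hT
  refine ⟨fun t ht => ?_, fun t ht => ?_⟩
  · rw [hT t ht]
    exact (hasDerivWithinAt_clm_inverse_apply (fun x => hS x t ht) (hinv t ht) y).congr_of_mem
      (fun u hu => by rw [hT u hu]) ht
  · have hTy : ContinuousWithinAt (fun u => T u y) s t :=
      (hTcont t ht).clm_apply continuousWithinAt_const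
    have hS'Ty : ContinuousWithinAt (fun u => S' u (T u y)) s t :=
      tendsto_apply_of_forall_tendsto_apply (fun x => hS' x t ht) hTy
    exact ((hTcont t ht).clm_apply hS'Ty).neg

end StrongDerivative

/-- Let `X` and `Y` be Banach spaces, `J = [a,b]` a compact interval, and
`S : J → B(X,Y)` strongly continuously differentiable with strong derivative `S'`. If `S(t)`
is invertible (with inverse `T(t) ∈ B(Y,X)`) for every `t ∈ J`, then the family
`t ↦ S(t)⁻¹ = T(t)` is strongly continuously differentiable in `B(Y,X)`, with strong
derivative `−S(t)⁻¹ S'(t) S(t)⁻¹`. -/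
theorem statement6
    {X Y : Type*}
    [NormedAddCommGroup X] [NormedSpace ℝ X] [CompleteSpace X]
    [NormedAddCommGroup Y] [NormedSpace ℝ Y] [CompleteSpace Y]
    (a b : ℝ) (hab : a ≤ b)
    (S S' : ℝ → X →L[ℝ] Y)
    (hSderiv : ∀ x : X, ∀ t ∈ Icc a b,
      HasDerivWithinAt (fun u => S u x) (S' t x) (Icc a b) t)
    (hS'cont : ∀ x : X, ContinuousOn (fun t => S' t x) (Icc a b))
    (T : ℝ → Y →L[ℝ] X)
    (hT₁ : ∀ t ∈ Icc a b, (S t).comp (T t) = ContinuousLinearMap.id ℝ Y)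
    (hT₂ : ∀ t ∈ Icc a b, (T t).comp (S t) = ContinuousLinearMap.id ℝ X) :
    ∀ y : Y, (∀ t ∈ Icc a b,
      HasDerivWithinAt (fun u => T u y) (-(T t (S' t (T t y)))) (Icc a b) t) ∧
      ContinuousOn (fun t => -(T t (S' t (T t y)))) (Icc a b) := by
  exact statement6_general hSderiv hS'cont hT₁ hT₂
end

section
/- Let X and Y be Banach spaces, J a compact interval, X₀ ⊆ X a dense subspace, and Y₀ a Banach space equipped with a continuous linear injection j : Y₀ → Y. Let S : J → B(X,Y₀) be a family of bounded operators and suppose there is a strongly continuous family S' : J → B(X,Y₀) such that for every x ∈ X₀ the map t ↦ j(S(t)x) is differentiable in Y with derivative j(S'(t)x). Then for every x ∈ X the map t ↦ S(t)x is differentiable in Y₀ with derivative S'(t)x. -/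
/-!
For `x ∈ X₀`, both `j (S t x)` and `j (∫ r in c..t, S' r x)` have derivative `j (S' t x)`, so
injectivity of `j` gives `S t x - S c x = ∫ r in c..t, S' r x` already in `Y₀`. By
Banach–Steinhaus, `S'` is bounded on compact intervals, so both sides are continuous in `x` and
the identity extends from `X₀` to `X`. Differentiating the integral yields the claim in `Y₀`.
-/

open Set

open intervalIntegral
open scoped Interval Topology

section FundamentalTheorem

variable {E : Type*} [NormedAddCommGroup E] [NormedSpace ℝ E] [CompleteSpace E]
  {J : Set ℝ} {c t : ℝ}

theorem ftcFilter_nhdsWithin_of_ordConnected (hJ : J.OrdConnected) (ht : t ∈ J) :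
    FTCFilter t (𝓝[J] t) (𝓝[J] t) where
  toTendstoIxxClass :=
    have : Filter.TendstoIxxClass Icc (𝓝[J] t) (𝓝[J] t) := Filter.tendstoIxxClass_inf
    Filter.tendstoIxxClass_of_subset fun _ _ => Ioc_subset_Icc_self
  pure_le := pure_le_nhdsWithin ht
  le_nhds := nhdsWithin_le_nhds
  meas_gen := hJ.measurableSet.nhdsWithin_isMeasurablyGenerated t

theorem hasDerivWithinAt_integral_of_ordConnected (hJ : J.OrdConnected) {f : ℝ → E}
    (hf : ContinuousOn f J) (hc : c ∈ J) (ht : t ∈ J) :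
    HasDerivWithinAt (fun u => ∫ r in c..u, f r) (f t) J t := by
  have := ftcFilter_nhdsWithin_of_ordConnected hJ ht
  exact integral_hasDerivWithinAt_right
    (hf.mono (hJ.uIcc_subset hc ht)).intervalIntegrable
    (hf.stronglyMeasurableAtFilter_nhdsWithin hJ.measurableSet t) (hf t ht)

theorem sub_eq_integral_of_injective_comp {F : Type*} [NormedAddCommGroup F] [NormedSpace ℝ F]
    (hJ : J.OrdConnected) {j : E →L[ℝ] F} (hj : Function.Injective j) {f f' : ℝ → E}
    (hf' : ContinuousOn f' J)
    (hderiv : ∀ u ∈ J, HasDerivWithinAt (fun v => j (f v)) (j (f' u)) J u)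
    (hc : c ∈ J) (ht : t ∈ J) :
    f t - f c = ∫ r in c..t, f' r := by
  let g : ℝ → F := fun u => j (f u) - j (∫ r in c..u, f' r)
  have g_deriv : ∀ u ∈ J, HasDerivWithinAt g 0 J u := fun u hu => by
    simpa only [sub_self] using! (hderiv u hu).sub <| j.hasFDerivAt.comp_hasDerivWithinAt u
      (hasDerivWithinAt_integral_of_ordConnected hJ hf' hc hu)
  have g_const : g t = g c := by
    simpa only [zero_mul, norm_le_zero_iff, sub_eq_zero] using
      hJ.convex.norm_image_sub_le_of_norm_hasDerivWithin_le g_deriv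
        (fun _ _ => norm_zero.le) hc ht
  simp only [g, integral_same, map_zero, sub_zero] at g_const
  apply hj
  rw [map_sub, ← g_const, sub_sub_cancel]

end FundamentalTheorem

section StronglyContinuous

variable {X : Type*} [SeminormedAddCommGroup X] [CompleteSpace X]

theorem exists_opNorm_le_of_isCompact {α 𝕜 𝕜₂ E : Type*} [TopologicalSpace α]
    [NontriviallyNormedField 𝕜] [NontriviallyNormedField 𝕜₂] {σ : 𝕜 →+* 𝕜₂} [RingHomIsometric σ]
    [NormedSpace 𝕜 X] [SeminormedAddCommGroup E] [NormedSpace 𝕜₂ E]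
    {T : α → X →SL[σ] E} {K : Set α} (hK : IsCompact K)
    (hT : ∀ x, ContinuousOn (fun r => T r x) K) :
    ∃ M, ∀ r ∈ K, ‖T r‖ ≤ M := by
  obtain ⟨M, hM⟩ : ∃ M, ∀ r : K, ‖T r‖ ≤ M := banach_steinhaus fun x =>
    (hK.exists_bound_of_continuousOn (hT x)).imp fun _ hC r => hC r r.2
  exact ⟨M, fun r hr => hM ⟨r, hr⟩⟩

variable {E : Type*} [NormedSpace ℝ X] [NormedAddCommGroup E] [NormedSpace ℝ E]

theorem continuous_integral_apply_of_strongly_continuousOn {T : ℝ → X →L[ℝ] E} {a b : ℝ}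
    (hT : ∀ x, ContinuousOn (fun r => T r x) [[a, b]]) :
    Continuous fun x => ∫ r in a..b, T r x := by
  obtain ⟨M, hM⟩ := exists_opNorm_le_of_isCompact isCompact_uIcc hT
  let I : X →+ E := AddMonoidHom.mk' (fun x => ∫ r in a..b, T r x) fun x y => by
    simp only [map_add]
    exact integral_add (hT x).intervalIntegrable (hT y).intervalIntegrable
  refine AddMonoidHomClass.continuous_of_bound I (M * |b - a|) fun x => ?_
  calc ‖∫ r in a..b, T r x‖ ≤ M * ‖x‖ * |b - a| :=
        norm_integral_le_of_norm_le_const fun r hr =>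
          (T r).le_of_opNorm_le (hM r (uIoc_subset_uIcc hr)) x
    _ = M * |b - a| * ‖x‖ := by ring

end StronglyContinuous

theorem statement7_general {X Y Y₀ : Type*}
    [SeminormedAddCommGroup X] [NormedSpace ℝ X] [CompleteSpace X]
    [NormedAddCommGroup Y] [NormedSpace ℝ Y]
    [NormedAddCommGroup Y₀] [NormedSpace ℝ Y₀] [CompleteSpace Y₀]
    {J : Set ℝ} (hJ : J.OrdConnected) {X₀ : Set X} (hX₀ : Dense X₀)
    (j : Y₀ →L[ℝ] Y) (hj : Function.Injective j) (S S' : ℝ → X →L[ℝ] Y₀)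
    (hS'cont : ∀ x, ContinuousOn (fun t => S' t x) J)
    (hSderiv : ∀ x ∈ X₀, ∀ t ∈ J, HasDerivWithinAt (fun u => j (S u x)) (j (S' t x)) J t) :
    ∀ x, ∀ t ∈ J, HasDerivWithinAt (fun u => S u x) (S' t x) J t := by
  intro x t ht
  have integral_formula : ∀ u ∈ J, S u x = S t x + ∫ r in t..u, S' r x := fun u hu => by
    have integral_cont : Continuous fun y => ∫ r in t..u, S' r y :=
      continuous_integral_apply_of_strongly_continuousOn fun y =>
        (hS'cont y).mono (hJ.uIcc_subset ht hu)
    refine congrFun (Continuous.ext_on hX₀ (S u).continuous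
      ((S t).continuous.add integral_cont) fun y hy => ?_) x
    exact sub_eq_iff_eq_add'.1 <|
      sub_eq_integral_of_injective_comp hJ hj (hS'cont y) (hSderiv y hy) ht hu
  exact ((hasDerivWithinAt_integral_of_ordConnected hJ (hS'cont x) ht ht).const_add (S t x)).congr
    integral_formula (integral_formula t ht)

/-- Let `X` and `Y` be Banach spaces, `J = [a,b]` a compact interval,
`X₀ ⊆ X` a dense subspace, and `Y₀` a Banach space with a continuous linear injection
`j : Y₀ → Y`. Let `S : J → B(X,Y₀)` be a family of bounded operators and suppose there is a
strongly continuous family `S' : J → B(X,Y₀)` such that for every `x ∈ X₀` the map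
`t ↦ j(S(t)x)` is differentiable in `Y` with derivative `j(S'(t)x)`. Then for every `x ∈ X`
the map `t ↦ S(t)x` is differentiable in `Y₀` with derivative `S'(t)x`. -/
theorem statement7
    {X Y Y₀ : Type*}
    [NormedAddCommGroup X] [NormedSpace ℝ X] [CompleteSpace X]
    [NormedAddCommGroup Y] [NormedSpace ℝ Y] [CompleteSpace Y]
    [NormedAddCommGroup Y₀] [NormedSpace ℝ Y₀] [CompleteSpace Y₀]
    (a b : ℝ) (hab : a ≤ b)
    (X₀ : Submodule ℝ X) (hX₀ : Dense (X₀ : Set X))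
    (j : Y₀ →L[ℝ] Y) (hj : Function.Injective j)
    (S S' : ℝ → X →L[ℝ] Y₀)
    (hS'cont : ∀ x : X, ContinuousOn (fun t => S' t x) (Icc a b))
    (hSderiv : ∀ x ∈ X₀, ∀ t ∈ Icc a b,
      HasDerivWithinAt (fun u => j (S u x)) (j (S' t x)) (Icc a b) t) :
    ∀ x : X, ∀ t ∈ Icc a b,
      HasDerivWithinAt (fun u => S u x) (S' t x) (Icc a b) t := by
  exact statement7_general ordConnected_Icc hX₀ j hj S S' hS'cont hSderiv
end

section
/- Let X and Y be complex Hilbert spaces, J a compact interval, and S : J → B(X,Y) strongly continuously differentiable with strong derivative S'. If S'(r) is a compact operator for every r ∈ J, then S(t) − S(s) is a compact operator for all s, t ∈ J. -/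
open Set

/-!
The difference `S t - S s` is the strong integral of `S'` over `[s, t]`, so it suffices that a
dominated strong integral of compact operators is compact. Given a bounded sequence `x n`, the
values `S' r (x n)` form, for each fixed `r`, a totally bounded set. Round them to the nearest of
the first `N` points of a sequence dense in the (separable) essential range. For each `r` the
rounding error tends to `0` uniformly in `n`, hence by dominated convergence so does the error
made in the integrals. The rounded integrals form a bounded subset of a finite-dimensional space,
and a uniform limit of families with totally bounded range has totally bounded range.
-/

open Filter Topology MeasureTheory

section TotallyBounded

theorem totallyBounded_of_forall_seq {α : Type*} [UniformSpace α] {s : Set α}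
    (h : ∀ u : ℕ → α, (∀ n, u n ∈ s) → TotallyBounded (range u)) : TotallyBounded s := by
  intro V hV
  by_contra! hcover
  obtain ⟨u, hus, hu⟩ : ∃ u : ℕ → α, (∀ n, u n ∈ s) ∧ ∀ n, ∀ m < n, (u n, u m) ∉ V := by
    simp only [not_subset, mem_iUnion₂, not_exists] at hcover
    simpa only [forall_and, forall_mem_image] using! seq_of_forall_finite_exists hcover
  obtain ⟨I, -, hI, hcov⟩ := exists_subset_image_finite_and.1
    (image_univ.symm ▸ (h u hus).exists_subset hV : ∃ t ⊆ u '' univ, t.Finite ∧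
      range u ⊆ ⋃ y ∈ t, {x | (x, y) ∈ V})
  obtain ⟨N, hN⟩ := hI.bddAbove
  obtain ⟨_, ⟨m, hm, rfl⟩, hmV⟩ := mem_iUnion₂.1 (hcov (mem_range_self (N + 1)))
  exact hu (N + 1) m (Nat.lt_succ_of_le (hN hm)) hmV

theorem totallyBounded_range_of_tendstoUniformly {ι κ α : Type*} [UniformSpace α]
    {p : Filter κ} [p.NeBot] {F : κ → ι → α} {f : ι → α} (hF : TendstoUniformly F f p)
    (htb : ∀ k, TotallyBounded (range (F k))) : TotallyBounded (range f) := by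
  intro V hV
  obtain ⟨W, hW, hWV⟩ := comp_mem_uniformity_sets hV
  obtain ⟨k, hk⟩ := (hF W hW).exists
  obtain ⟨t, ht, hcov⟩ := htb k W hW
  refine ⟨t, ht, range_subset_iff.2 fun i => ?_⟩
  obtain ⟨y, hyt, hy⟩ := mem_iUnion₂.1 (hcov (mem_range_self i))
  exact mem_iUnion₂.2 ⟨y, hyt, hWV ⟨F k i, hk i, hy⟩⟩

theorem totallyBounded_of_subset_finiteDimensional {E : Type*} [NormedAddCommGroup E]
    [NormedSpace ℝ E] (V : Submodule ℝ E) [FiniteDimensional ℝ V] {s : Set E} (hsV : s ⊆ V)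
    (hs : Bornology.IsBounded s) : TotallyBounded s := by
  have : ProperSpace V := FiniteDimensional.proper ℝ V
  obtain ⟨C, hC⟩ := hs.exists_norm_le
  refine ((isCompact_closedBall (0 : V) C).image continuous_subtype_val).totallyBounded.subset ?_
  exact fun x hx => ⟨⟨x, hsV hx⟩, mem_closedBall_zero_iff.2 (hC x hx), rfl⟩

theorem isCompactOperator_of_forall_seq {X Y : Type*} [SeminormedAddCommGroup X]
    [NormedAddCommGroup Y] [CompleteSpace Y] {f : X → Y}
    (h : ∀ x : ℕ → X, (∀ n, ‖x n‖ ≤ 1) → TotallyBounded (range fun n => f (x n))) :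
    IsCompactOperator f := by
  rw [isCompactOperator_iff_exists_mem_nhds_isCompact_closure_image]
  refine ⟨Metric.closedBall 0 1, Metric.closedBall_mem_nhds 0 one_pos, ?_⟩
  refine TotallyBounded.isCompact_of_isClosed (.closure ?_) isClosed_closure
  refine totallyBounded_of_forall_seq fun u hu => ?_
  choose x hx hxu using hu
  simpa only [hxu] using h x fun n => mem_closedBall_zero_iff.1 (hx n)

end TotallyBounded

section NearestPt

open SimpleFunc

theorem tendsto_iSup_edist_nearestPt {α : Type*} [MeasurableSpace α] [PseudoEMetricSpace α]
    [OpensMeasurableSpace α] {e : ℕ → α} {K : Set α} (hK : TotallyBounded K)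
    (he : K ⊆ closure (range e)) :
    Tendsto (fun N => ⨆ x ∈ K, edist (nearestPt e N x) x) atTop (𝓝 0) := by
  refine ENNReal.tendsto_nhds_zero.2 fun ε hε => ?_
  obtain ⟨t, htK, ht, hcov⟩ := EMetric.totallyBounded_iff'.1 hK (ε / 2) (ENNReal.half_pos hε.ne')
  have hnear : ∀ y ∈ t, ∃ k, edist (e k) y < ε / 2 := fun y hy => by
    simpa only [exists_range_iff, edist_comm y] using
      EMetric.mem_closure_iff.1 (he (htK hy)) (ε / 2) (ENNReal.half_pos hε.ne')
  choose! k hk using hnear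
  filter_upwards [(eventually_all_finite ht).2 fun y _ => eventually_ge_atTop (k y)] with N hN
  refine iSup₂_le fun x hx => ?_
  obtain ⟨y, hyt, hxy⟩ := mem_iUnion₂.1 (hcov hx)
  calc edist (nearestPt e N x) x
      ≤ edist (e (k y)) x := edist_nearestPt_le e x (hN y hyt)
    _ ≤ edist (e (k y)) y + edist y x := edist_triangle ..
    _ ≤ ε / 2 + ε / 2 := by
      rw [edist_comm y]
      exact add_le_add (hk y hyt).le hxy.le
    _ = ε := ENNReal.add_halves ε

variable {E : Type*} [SeminormedAddCommGroup E] [MeasurableSpace E] [OpensMeasurableSpace E]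
  {e : ℕ → E}

theorem edist_nearestPt_le_enorm (he : e 0 = 0) (N : ℕ) (x : E) :
    edist (nearestPt e N x) x ≤ ‖x‖ₑ := by
  simpa only [he, edist_comm (0 : E), edist_zero_right] using edist_nearestPt_le e x N.zero_le

theorem norm_nearestPt_le (he : e 0 = 0) (N : ℕ) (x : E) : ‖nearestPt e N x‖ ≤ 2 * ‖x‖ := by
  have hdist : ‖nearestPt e N x - x‖ ≤ ‖x‖ := by
    simpa only [edist_eq_enorm_sub, enorm_le_iff_norm_le] using edist_nearestPt_le_enorm he N x
  linarith [norm_le_norm_sub_add (nearestPt e N x) x]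

end NearestPt

section Integral

variable {ι α E : Type*} [MeasurableSpace α] {μ : Measure α} [NormedAddCommGroup E]
  {f : ι → α → E} {g : α → ℝ}

theorem exists_seq_forall_ae_mem_closure_range [Countable ι]
    (hf : ∀ i, AEStronglyMeasurable (f i) μ) :
    ∃ e : ℕ → E, e 0 = 0 ∧ ∀ i, ∀ᵐ a ∂μ, f i a ∈ closure (range e) := by
  choose t ht hft using fun i => (hf i).isSeparable_ae_range
  obtain ⟨c, hc, htc⟩ := TopologicalSpace.IsSeparable.iUnion ht
  obtain ⟨u, hu⟩ := (hc.insert 0).exists_eq_range (insert_nonempty 0 c)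
  refine ⟨fun n => n.casesOn 0 u, rfl, fun i => (hft i).mono fun a ha => ?_⟩
  rw [Nat.range_casesOn, ← hu]
  exact closure_mono (by grind) (htc (mem_iUnion_of_mem i ha))

theorem aestronglyMeasurable_simpleFunc_comp [MeasurableSpace E] [BorelSpace E]
    (φ : SimpleFunc E E) {f : α → E} (hf : AEStronglyMeasurable f μ) :
    AEStronglyMeasurable (fun a => φ (f a)) μ :=
  φ.stronglyMeasurable.aestronglyMeasurable.comp_aemeasurable hf.aemeasurable

theorem tendsto_lintegral_iSup_edist_nearestPt [Countable ι] [MeasurableSpace E] [BorelSpace E]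
    {e : ℕ → E} (he : e 0 = 0) (hf : ∀ i, AEStronglyMeasurable (f i) μ)
    (hfe : ∀ i, ∀ᵐ a ∂μ, f i a ∈ closure (range e)) (hg : Integrable g μ)
    (hfg : ∀ i, ∀ᵐ a ∂μ, ‖f i a‖ ≤ g a)
    (htb : ∀ᵐ a ∂μ, TotallyBounded (range fun i => f i a)) :
    Tendsto (fun N => ∫⁻ a, ⨆ i, edist (SimpleFunc.nearestPt e N (f i a)) (f i a) ∂μ)
      atTop (𝓝 0) := by
  rw [← lintegral_zero (μ := μ)]
  refine tendsto_lintegral_of_dominated_convergence' (fun a => ‖g a‖ₑ) (fun N => ?_) (fun N => ?_)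
    hg.hasFiniteIntegral.ne ?_
  · exact .iSup fun i => (aestronglyMeasurable_simpleFunc_comp _ (hf i)).edist (hf i)
  · filter_upwards [ae_all_iff.2 hfg] with a ha
    refine iSup_le fun i => (edist_nearestPt_le_enorm he N _).trans ?_
    exact enorm_le_iff_norm_le.2 ((ha i).trans (le_abs_self _))
  · filter_upwards [htb, ae_all_iff.2 hfe] with a hK hae
    simpa only [iSup_range] using tendsto_iSup_edist_nearestPt hK (range_subset_iff.2 hae)

variable [NormedSpace ℝ E] [CompleteSpace E]

theorem integral_mem_of_isClosed_submodule {V : Submodule ℝ E} (hV : IsClosed (V : Set E))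
    {f : α → E} (hf : ∀ᵐ a ∂μ, f a ∈ V) : ∫ a, f a ∂μ ∈ V := by
  by_cases hint : Integrable f μ
  · have hzero : V.mkQL (∫ a, f a ∂μ) = 0 := by
      rw [← V.mkQL.integral_comp_comm hint]
      refine integral_eq_zero_of_ae (hf.mono fun a ha => ?_)
      simpa using ha
    simpa using hzero
  · simp only [integral_undef hint, V.zero_mem]

theorem totallyBounded_range_integral_of_mem_finiteDimensional (V : Submodule ℝ E)
    [FiniteDimensional ℝ V] (hfV : ∀ i, ∀ᵐ a ∂μ, f i a ∈ V) (hg : Integrable g μ)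
    (hfg : ∀ i, ∀ᵐ a ∂μ, ‖f i a‖ ≤ g a) :
    TotallyBounded (range fun i => ∫ a, f i a ∂μ) := by
  refine totallyBounded_of_subset_finiteDimensional V ?_ ?_
  · exact range_subset_iff.2 fun i =>
      integral_mem_of_isClosed_submodule V.closed_of_finiteDimensional (hfV i)
  · refine isBounded_iff_forall_norm_le.2 ⟨∫ a, g a ∂μ, forall_mem_range.2 fun i => ?_⟩
    exact norm_integral_le_of_norm_le hg (hfg i)

theorem totallyBounded_range_integral_simpleFunc_comp [MeasurableSpace E] (φ : SimpleFunc E E)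
    (hg : Integrable g μ) (hfg : ∀ i, ∀ᵐ a ∂μ, ‖φ (f i a)‖ ≤ g a) :
    TotallyBounded (range fun i => ∫ a, φ (f i a) ∂μ) := by
  have : FiniteDimensional ℝ (Submodule.span ℝ (range φ)) := .span_of_finite ℝ φ.finite_range
  exact totallyBounded_range_integral_of_mem_finiteDimensional (Submodule.span ℝ (range φ))
    (fun i => .of_forall fun a => Submodule.subset_span (mem_range_self _)) hg hfg

theorem totallyBounded_range_integral [Countable ι] (hf : ∀ i, AEStronglyMeasurable (f i) μ)
    (hg : Integrable g μ) (hfg : ∀ i, ∀ᵐ a ∂μ, ‖f i a‖ ≤ g a)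
    (htb : ∀ᵐ a ∂μ, TotallyBounded (range fun i => f i a)) :
    TotallyBounded (range fun i => ∫ a, f i a ∂μ) := by
  borelize E
  obtain ⟨e, he, hfe⟩ := exists_seq_forall_ae_mem_closure_range hf
  have hround (N : ℕ) (i : ι) : ∀ᵐ a ∂μ, ‖SimpleFunc.nearestPt e N (f i a)‖ ≤ 2 * g a :=
    (hfg i).mono fun a ha => (norm_nearestPt_le he N _).trans (by gcongr)
  refine totallyBounded_range_of_tendstoUniformly (p := atTop)
    (F := fun N i => ∫ a, SimpleFunc.nearestPt e N (f i a) ∂μ) ?_ fun N =>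
      totallyBounded_range_integral_simpleFunc_comp _ (hg.const_mul 2) (hround N)
  refine EMetric.tendstoUniformly_iff.2 fun ε hε => ?_
  have hlim := tendsto_lintegral_iSup_edist_nearestPt he hf hfe hg hfg htb
  filter_upwards [hlim.eventually_lt_const hε] with N hN i
  refine lt_of_le_of_lt ?_ hN
  have hround_int : Integrable (fun a => SimpleFunc.nearestPt e N (f i a)) μ :=
    (hg.const_mul 2).mono' (aestronglyMeasurable_simpleFunc_comp _ (hf i)) (hround N i)
  calc edist (∫ a, f i a ∂μ) (∫ a, SimpleFunc.nearestPt e N (f i a) ∂μ)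
      = ‖∫ a, (SimpleFunc.nearestPt e N (f i a) - f i a) ∂μ‖ₑ := by
        rw [edist_comm, edist_eq_enorm_sub, integral_sub hround_int
          (hg.mono' (hf i) (hfg i))]
    _ ≤ ∫⁻ a, ‖SimpleFunc.nearestPt e N (f i a) - f i a‖ₑ ∂μ := enorm_integral_le_lintegral_enorm _
    _ ≤ ∫⁻ a, ⨆ j, edist (SimpleFunc.nearestPt e N (f j a)) (f j a) ∂μ := by
        refine lintegral_mono fun a => ?_
        rw [← edist_eq_enorm_sub]
        exact le_iSup (fun j => edist (SimpleFunc.nearestPt e N (f j a)) (f j a)) i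

theorem intervalIntegral_eq_sub_of_hasDerivWithinAt {J : Set ℝ} (hJ : J.OrdConnected) {f f' : ℝ → E}
    (hf : ∀ r ∈ J, HasDerivWithinAt f (f' r) J r) (hf' : ContinuousOn f' J) {s t : ℝ}
    (hs : s ∈ J) (ht : t ∈ J) : ∫ r in s..t, f' r = f t - f s := by
  have hsub : uIcc s t ⊆ J := hJ.uIcc_subset hs ht
  refine intervalIntegral.integral_eq_sub_of_hasDeriv_right
    (fun r hr => (hf r (hsub hr)).continuousWithinAt.mono hsub) (fun r hr => ?_)
    (hf'.mono hsub).intervalIntegrable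
  have hnhds : J ∈ 𝓝 r := mem_of_superset (Icc_mem_nhds hr.1 hr.2) hsub
  exact ((hf r (mem_of_mem_nhds hnhds)).hasDerivAt hnhds).hasDerivWithinAt

end Integral

section Operator

variable {𝕜 X Y : Type*} [NontriviallyNormedField 𝕜]
  [SeminormedAddCommGroup X] [NormedSpace 𝕜 X] [NormedAddCommGroup Y] [NormedSpace 𝕜 Y]

theorem isCompactOperator_integral [NormedSpace ℝ Y] [CompleteSpace Y] {α : Type*}
    [MeasurableSpace α] {μ : Measure α} {U : α → X →L[𝕜] Y} {g : α → ℝ}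
    (hU : ∀ x, AEStronglyMeasurable (fun a => U a x) μ) (hg : Integrable g μ)
    (hUg : ∀ᵐ a ∂μ, ‖U a‖ ≤ g a) (hcompact : ∀ᵐ a ∂μ, IsCompactOperator (U a)) :
    IsCompactOperator fun x => ∫ a, U a x ∂μ := by
  refine isCompactOperator_of_forall_seq fun x hx => ?_
  refine totallyBounded_range_integral (fun n => hU (x n)) hg (fun n => ?_) ?_
  · filter_upwards [hUg] with a ha
    exact ((U a).le_of_opNorm_le_of_le ha (hx n)).trans_eq (mul_one _)
  · filter_upwards [hcompact] with a ha
    refine (ha.isCompact_closure_image_closedBall (f := (U a : X →ₗ[𝕜] Y)) 1).totallyBounded.subset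
      (range_subset_iff.2 fun n => ?_)
    exact subset_closure ⟨x n, mem_closedBall_zero_iff.2 (hx n), rfl⟩

theorem exists_opNorm_le_of_continuousOn_apply [CompleteSpace X] {α : Type*} [TopologicalSpace α]
    {U : α → X →L[𝕜] Y} {K : Set α} (hK : IsCompact K)
    (hU : ∀ x, ContinuousOn (fun r => U r x) K) : ∃ C, ∀ r ∈ K, ‖U r‖ ≤ C := by
  obtain ⟨C, hC⟩ := banach_steinhaus (g := fun r : K => U r) fun x =>
    let ⟨C, hC⟩ := hK.exists_bound_of_continuousOn (hU x)
    ⟨C, fun r => hC r r.2⟩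
  exact ⟨C, fun r hr => hC ⟨r, hr⟩⟩

theorem isCompactOperator_intervalIntegral [NormedSpace ℝ Y] [CompleteSpace X] [CompleteSpace Y]
    {U : ℝ → X →L[𝕜] Y} {s t : ℝ} (hU : ∀ x, ContinuousOn (fun r => U r x) (uIcc s t))
    (hcompact : ∀ r ∈ uIcc s t, IsCompactOperator (U r)) :
    IsCompactOperator fun x => ∫ r in s..t, U r x := by
  wlog hst : s ≤ t generalizing s t
  · rw [uIcc_comm] at hU hcompact
    simp_rw [intervalIntegral.integral_symm t s]
    exact (this hU hcompact (le_of_not_ge hst)).neg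
  simp_rw [intervalIntegral.integral_of_le hst]
  rw [uIcc_of_le hst] at hU hcompact
  obtain ⟨C, hC⟩ := exists_opNorm_le_of_continuousOn_apply isCompact_Icc hU
  have hae : ∀ᵐ r ∂volume.restrict (Ioc s t), r ∈ Icc s t :=
    (ae_restrict_mem measurableSet_Ioc).mono fun _ hr => Ioc_subset_Icc_self hr
  refine isCompactOperator_integral
    (fun x => ((hU x).mono Ioc_subset_Icc_self).aestronglyMeasurable measurableSet_Ioc)
    (integrable_const C) (hae.mono hC) (hae.mono hcompact)

end Operator

theorem statement8_general {𝕜 X Y : Type*} [NontriviallyNormedField 𝕜]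
    [NormedAddCommGroup X] [NormedSpace 𝕜 X] [CompleteSpace X]
    [NormedAddCommGroup Y] [NormedSpace 𝕜 Y] [NormedSpace ℝ Y] [CompleteSpace Y]
    {J : Set ℝ} (hJ : J.OrdConnected) {S S' : ℝ → X →L[𝕜] Y}
    (hSderiv : ∀ x, ∀ t ∈ J, HasDerivWithinAt (fun u => S u x) (S' t x) J t)
    (hS'cont : ∀ x, ContinuousOn (fun t => S' t x) J)
    (hS'compact : ∀ r ∈ J, IsCompactOperator (S' r)) {s t : ℝ} (hs : s ∈ J) (ht : t ∈ J) :
    IsCompactOperator (S t - S s) := by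
  have hsub : uIcc s t ⊆ J := hJ.uIcc_subset hs ht
  have hintegral : ⇑(S t - S s) = fun x => ∫ r in s..t, S' r x := funext fun x =>
    (intervalIntegral_eq_sub_of_hasDerivWithinAt hJ (hSderiv x) (hS'cont x) hs ht).symm
  rw [hintegral]
  exact isCompactOperator_intervalIntegral (fun x => (hS'cont x).mono hsub)
    fun r hr => hS'compact r (hsub hr)

/-- Let `X` and `Y` be complex Hilbert spaces, `J = [a,b]` a compact
interval, and `S : J → B(X,Y)` strongly continuously differentiable with strong derivative
`S'`. If `S'(r)` is a compact operator for every `r ∈ J`, then `S(t) − S(s)` is a compact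
operator for all `s, t ∈ J`. -/
theorem statement8
    {X Y : Type*}
    [NormedAddCommGroup X] [InnerProductSpace ℂ X] [CompleteSpace X]
    [NormedAddCommGroup Y] [InnerProductSpace ℂ Y] [CompleteSpace Y]
    (a b : ℝ) (hab : a ≤ b)
    (S S' : ℝ → X →L[ℂ] Y)
    (hSderiv : ∀ x : X, ∀ t ∈ Icc a b,
      HasDerivWithinAt (fun u => S u x) (S' t x) (Icc a b) t)
    (hS'cont : ∀ x : X, ContinuousOn (fun t => S' t x) (Icc a b))
    (hS'compact : ∀ r ∈ Icc a b, IsCompactOperator (⇑(S' r))) :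
    ∀ s ∈ Icc a b, ∀ t ∈ Icc a b, IsCompactOperator (⇑(S t - S s)) :=
  fun _ hs _ ht => statement8_general ordConnected_Icc hSderiv hS'cont hS'compact hs ht
end

section
/- Let H be a complex Hilbert space, T > 0, and let E, F : [0,T] × [0,T] → B(H) be strongly continuous families of bounded operators (i.e., (t,s) ↦ E(t,s)x and (t,s) ↦ F(t,s)x are continuous for every x ∈ H). Then there exists a unique strongly continuous family V : [0,T] × [0,T] → B(H) such that for all x ∈ H and all s, t ∈ [0,T], V(t,s)x = E(t,s)x + ∫_s^t V(t,r)F(r,s)x dr (Bochner integral). -/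
open Set intervalIntegral

/-!
A strongly continuous family of operators `X → Y` on a compact square is the same thing as a
bounded linear map from `X` to the continuous functions on the square with values in `Y`, by the
uniform boundedness principle. These maps form a Banach space, on which the integral term is a
bounded linear operator `𝒱`. Iterating the integral gives `‖𝒱 ^ n‖ ≤ c ^ n / n!`, so some power of
`𝒱` has norm less than `1`. Hence `1 - 𝒱` is invertible and `V = E + 𝒱 V` has exactly one solution.
-/

theorem isUnit_one_sub_of_norm_pow_lt_one {R : Type*} [NormedRing R] [HasSummableGeomSeries R]
    {a : R} {n : ℕ} (h : ‖a ^ n‖ < 1) : IsUnit (1 - a) := by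
  have hcomm : Commute (1 - a) (∑ i ∈ Finset.range n, a ^ i) :=
    .sum_right _ _ _ fun i _ => (Commute.one_left _).sub_left (.self_pow a i)
  refine (hcomm.isUnit_mul_iff.1 ?_).1
  rw [mul_neg_geom_sum]
  exact isUnit_one_sub_of_norm_lt_one h

theorem norm_intervalIntegral_le_of_norm_le_mul_pow {G : Type*} [NormedAddCommGroup G]
    [NormedSpace ℝ G] {g : ℝ → G} {C s t : ℝ} {n : ℕ}
    (hg : ∀ r ∈ uIoc s t, ‖g r‖ ≤ C * |t - r| ^ n) :
    ‖∫ r in s..t, g r‖ ≤ C * (|t - s| ^ (n + 1) / (n + 1)) := by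
  have hbound : Continuous fun r : ℝ => C * |t - r| ^ n := by fun_prop
  calc ‖∫ r in s..t, g r‖ = ‖∫ r in uIoc s t, g r‖ := norm_intervalIntegral_eq _ _ _ _
    _ ≤ ∫ r in uIoc s t, C * |t - r| ^ n :=
        MeasureTheory.norm_integral_le_of_norm_le (hbound.intervalIntegrable s t).def'
          (MeasureTheory.ae_restrict_of_forall_mem measurableSet_uIoc hg)
    _ = C * (|t - s| ^ (n + 1) / (n + 1)) := by
        simp only [abs_sub_comm t]
        rw [MeasureTheory.integral_const_mul, uIoc_comm, integral_pow_abs_sub_uIoc]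

section StrongFamily

-- Needed for operators between these spaces: the compactness of the square is a nested instance.
set_option maxSynthPendingDepth 3

variable {𝕜 : Type*} [NontriviallyNormedField 𝕜] {a b : ℝ} {X Y : Type*}
  [NormedAddCommGroup X] [NormedSpace 𝕜 X] [NormedAddCommGroup Y] [NormedSpace 𝕜 Y]

variable (𝕜 a b X Y) in
/-- Strongly continuous families of bounded operators `X → Y` indexed by `[a, b] × [a, b]`, encoded
as the bounded operators sending a vector to its orbit, so that the family `A` corresponds to
`x ↦ ((t, s) ↦ A t s x)`. The operator norm is the supremum of the norms `‖A t s‖`. -/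
abbrev StrongFamily : Type _ := X →L[𝕜] C(Icc a b × Icc a b, Y)

namespace StrongFamily

theorem norm_apply_le (U : StrongFamily 𝕜 a b X Y) (x : X) (p : Icc a b × Icc a b) :
    ‖U x p‖ ≤ ‖U‖ * ‖x‖ :=
  ((U x).norm_coe_le_norm p).trans (U.le_opNorm x)

section OfContinuousOn

variable [CompleteSpace X]

/-- The strongly continuous family obtained by restricting `A` to `[a, b] × [a, b]`. -/
noncomputable def ofContinuousOn (A : ℝ → ℝ → X →L[𝕜] Y)
    (hA : ∀ x, ContinuousOn (fun p : ℝ × ℝ => A p.1 p.2 x) (Icc a b ×ˢ Icc a b)) :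
    StrongFamily 𝕜 a b X Y :=
  have hcont (x : X) : Continuous fun p : Icc a b × Icc a b => A p.1 p.2 x :=
    (hA x).comp_continuous (f := fun p : Icc a b × Icc a b => ((p.1 : ℝ), (p.2 : ℝ)))
      (by fun_prop) fun p => ⟨p.1.2, p.2.2⟩
  let orbit : X →ₗ[𝕜] C(Icc a b × Icc a b, Y) :=
    { toFun := fun x => ⟨fun p => A p.1 p.2 x, hcont x⟩
      map_add' := fun x y => by ext p; exact map_add (A p.1 p.2) x y
      map_smul' := fun c x => by ext p; exact map_smul (A p.1 p.2) c x }
  orbit.mkContinuousOfExistsBound <| by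
    obtain ⟨C, hC⟩ := banach_steinhaus (g := fun p : Icc a b × Icc a b => A p.1 p.2) fun x =>
      ⟨‖orbit x‖, (orbit x).norm_coe_le_norm⟩
    refine ⟨max C 0, fun x => (ContinuousMap.norm_le _ (by positivity)).2 fun p => ?_⟩
    exact (A p.1 p.2).le_of_opNorm_le (le_max_of_le_left (hC p)) x

@[simp]
theorem ofContinuousOn_apply (A : ℝ → ℝ → X →L[𝕜] Y)
    (hA : ∀ x, ContinuousOn (fun p : ℝ × ℝ => A p.1 p.2 x) (Icc a b ×ˢ Icc a b))
    (x : X) (p : Icc a b × Icc a b) : ofContinuousOn A hA x p = A p.1 p.2 x := rfl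

theorem ofContinuousOn_eq_iff {A B : ℝ → ℝ → X →L[𝕜] Y}
    {hA : ∀ x, ContinuousOn (fun p : ℝ × ℝ => A p.1 p.2 x) (Icc a b ×ˢ Icc a b)}
    {hB : ∀ x, ContinuousOn (fun p : ℝ × ℝ => B p.1 p.2 x) (Icc a b ×ˢ Icc a b)} :
    ofContinuousOn A hA = ofContinuousOn B hB ↔
      ∀ s ∈ Icc a b, ∀ t ∈ Icc a b, A t s = B t s := by
  refine ⟨fun h s hs t ht => ?_, fun h => ?_⟩
  · ext x
    exact congr($h x (⟨t, ht⟩, ⟨s, hs⟩))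
  · ext x p
    simp only [ofContinuousOn_apply, h _ p.2.2 _ p.1.2]

theorem exists_ofContinuousOn_eq (hab : a ≤ b) (U : StrongFamily 𝕜 a b X Y) :
    ∃ A : ℝ → ℝ → X →L[𝕜] Y,
      ∃ hA : ∀ x, ContinuousOn (fun p : ℝ × ℝ => A p.1 p.2 x) (Icc a b ×ˢ Icc a b),
        ofContinuousOn A hA = U := by
  refine ⟨fun t s => ContinuousMap.evalCLM 𝕜 (projIcc a b hab t, projIcc a b hab s) ∘L U,
    fun x => Continuous.continuousOn ?_, ?_⟩
  · change Continuous fun p : ℝ × ℝ => U x (projIcc a b hab p.1, projIcc a b hab p.2)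
    fun_prop
  · ext x p
    change U x (projIcc a b hab p.1, projIcc a b hab p.2) = U x p
    simp only [projIcc_val]

end OfContinuousOn

/-- The integrand `r ↦ U(t, r) F(r, s) x` of the Volterra operator, extended from `[a, b]` to `ℝ` by
clamping `r`. -/
noncomputable def integrand (hab : a ≤ b) (F : StrongFamily 𝕜 a b X X)
    (U : StrongFamily 𝕜 a b X Y) (x : X) (p : Icc a b × Icc a b) (r : ℝ) : Y :=
  U (F x (projIcc a b hab r, p.2)) (p.1, projIcc a b hab r)

section Integrand

variable (hab : a ≤ b) (F : StrongFamily 𝕜 a b X X) (U : StrongFamily 𝕜 a b X Y) (x : X)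

theorem continuous_uncurry_integrand : Continuous (integrand hab F U x).uncurry := by
  unfold integrand Function.uncurry
  fun_prop

theorem intervalIntegrable_integrand (p : Icc a b × Icc a b) (c d : ℝ) :
    IntervalIntegrable (integrand hab F U x p) MeasureTheory.volume c d :=
  ((continuous_uncurry_integrand hab F U x).comp (.prodMk_right p)).intervalIntegrable c d

theorem norm_integrand_le (p : Icc a b × Icc a b) (r : ℝ) :
    ‖integrand hab F U x p r‖ ≤ ‖U‖ * (‖F‖ * ‖x‖) :=
  (U.norm_apply_le _ _).trans <| by gcongr; exact F.norm_apply_le _ _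

variable [NormedSpace ℝ Y]

theorem continuous_integral_integrand :
    Continuous fun p : Icc a b × Icc a b => ∫ r in p.2..p.1, integrand hab F U x p r := by
  have hprimitive {c : Icc a b × Icc a b → ℝ} (hc : Continuous c) :
      Continuous fun p => ∫ r in a..c p, integrand hab F U x p r :=
    continuous_parametric_intervalIntegral_of_continuous
      (continuous_uncurry_integrand hab F U x) hc
  have hsub := (hprimitive (c := fun p => p.1) (by fun_prop)).sub
    (hprimitive (c := fun p => p.2) (by fun_prop))
  refine hsub.congr fun p => ?_
  exact integral_interval_sub_left (intervalIntegrable_integrand ..)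
    (intervalIntegrable_integrand ..)

theorem norm_integral_integrand_le (p : Icc a b × Icc a b) :
    ‖∫ r in p.2..p.1, integrand hab F U x p r‖ ≤ ‖F‖ * (b - a) * ‖U‖ * ‖x‖ :=
  calc ‖∫ r in p.2..p.1, integrand hab F U x p r‖
      ≤ ‖U‖ * (‖F‖ * ‖x‖) * |(p.1 : ℝ) - p.2| :=
        norm_integral_le_of_norm_le_const fun r _ => norm_integrand_le hab F U x p r
    _ ≤ ‖U‖ * (‖F‖ * ‖x‖) * (b - a) := by gcongr; exact Real.dist_le_of_mem_Icc p.1.2 p.2.2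
    _ = ‖F‖ * (b - a) * ‖U‖ * ‖x‖ := by ring

end Integrand

section Volterra

variable [NormedSpace ℝ Y] [SMulCommClass ℝ 𝕜 Y] (hab : a ≤ b) (F : StrongFamily 𝕜 a b X X)

/-- The Volterra operator with kernel `F`, which sends the family `U` to the family
`(t, s) ↦ ∫ r in s..t, U(t, r) F(r, s)`. -/
noncomputable def volterra : StrongFamily 𝕜 a b X Y →L[𝕜] StrongFamily 𝕜 a b X Y :=
  LinearMap.mkContinuous₂
    (LinearMap.mk₂ 𝕜
      (fun U x => (⟨fun p => ∫ r in p.2..p.1, integrand hab F U x p r,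
        continuous_integral_integrand hab F U x⟩ : C(Icc a b × Icc a b, Y)))
      (fun U W x => by
        ext p
        exact integral_add (intervalIntegrable_integrand ..) (intervalIntegrable_integrand ..))
      (fun c U x => by
        ext p
        exact integral_smul c _)
      (fun U x y => by
        ext p
        simp only [integrand, map_add, ContinuousMap.add_apply, ContinuousMap.coe_mk]
        exact integral_add (intervalIntegrable_integrand ..) (intervalIntegrable_integrand ..))
      (fun c U x => by
        ext p
        simp only [integrand, map_smul, ContinuousMap.smul_apply, ContinuousMap.coe_mk]
        exact integral_smul c _))
    (‖F‖ * (b - a)) fun U x => by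
      have := sub_nonneg.2 hab
      exact (ContinuousMap.norm_le _ (by positivity)).2 (norm_integral_integrand_le hab F U x)

@[simp]
theorem volterra_apply (U : StrongFamily 𝕜 a b X Y) (x : X) (p : Icc a b × Icc a b) :
    volterra hab F U x p = ∫ r in p.2..p.1, integrand hab F U x p r := rfl

theorem norm_volterra_pow_apply_apply_le (n : ℕ) (U : StrongFamily 𝕜 a b X Y) (x : X)
    (p : Icc a b × Icc a b) :
    ‖(volterra hab F ^ n) U x p‖ ≤ (‖F‖ * |(p.1 : ℝ) - p.2|) ^ n / n.factorial * ‖U‖ * ‖x‖ := by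
  induction n generalizing x p with
  | zero => simpa using U.norm_apply_le x p
  | succ n ih =>
    have hintegrand : ∀ r ∈ uIoc (p.2 : ℝ) p.1,
        ‖integrand hab F ((volterra hab F ^ n) U) x p r‖ ≤
          ‖F‖ ^ (n + 1) / n.factorial * ‖U‖ * ‖x‖ * |p.1 - r| ^ n := by
      intro r hr
      have hr' : r ∈ Icc a b := uIcc_subset_Icc p.2.2 p.1.2 (uIoc_subset_uIcc hr)
      simp only [integrand, projIcc_of_mem hab hr']
      refine (ih _ _).trans ?_
      calc (‖F‖ * |p.1 - r|) ^ n / n.factorial * ‖U‖ * ‖F x (⟨r, hr'⟩, p.2)‖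
          ≤ (‖F‖ * |p.1 - r|) ^ n / n.factorial * ‖U‖ * (‖F‖ * ‖x‖) := by
            gcongr
            exact F.norm_apply_le _ _
        _ = ‖F‖ ^ (n + 1) / n.factorial * ‖U‖ * ‖x‖ * |p.1 - r| ^ n := by ring
    rw [pow_succ', mul_apply_eq_comp, volterra_apply]
    refine (norm_intervalIntegral_le_of_norm_le_mul_pow hintegrand).trans_eq ?_
    rw [Nat.factorial_succ]
    push_cast
    field_simp
    ring

theorem norm_volterra_pow_le (n : ℕ) :
    ‖(volterra hab F : StrongFamily 𝕜 a b X Y →L[𝕜] StrongFamily 𝕜 a b X Y) ^ n‖ ≤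
      (‖F‖ * (b - a)) ^ n / n.factorial := by
  have := sub_nonneg.2 hab
  refine ContinuousLinearMap.opNorm_le_bound₂ _ (by positivity) fun U x => ?_
  refine (ContinuousMap.norm_le _ (by positivity)).2 fun p => ?_
  refine (norm_volterra_pow_apply_apply_le hab F n U x p).trans ?_
  gcongr
  exact Real.dist_le_of_mem_Icc p.1.2 p.2.2

theorem isUnit_one_sub_volterra [CompleteSpace Y] :
    IsUnit (1 - volterra hab F : StrongFamily 𝕜 a b X Y →L[𝕜] StrongFamily 𝕜 a b X Y) := by
  obtain ⟨n, hn⟩ := ((FloorSemiring.tendsto_pow_div_factorial_atTop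
    (‖F‖ * (b - a))).eventually_lt_const one_pos).exists
  exact isUnit_one_sub_of_norm_pow_lt_one ((norm_volterra_pow_le hab F n).trans_lt hn)

theorem existsUnique_eq_add_volterra [CompleteSpace Y] (E : StrongFamily 𝕜 a b X Y) :
    ∃! V, V = E + volterra hab F V := by
  simpa only [sub_apply, one_apply_eq_self, sub_eq_iff_eq_add]
    using (ContinuousLinearMap.isUnit_iff_bijective.1
      (isUnit_one_sub_volterra hab F)).existsUnique E

theorem ofContinuousOn_eq_add_volterra_iff [CompleteSpace X] {E V : ℝ → ℝ → X →L[𝕜] Y}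
    {F : ℝ → ℝ → X →L[𝕜] X}
    (hE : ∀ x, ContinuousOn (fun p : ℝ × ℝ => E p.1 p.2 x) (Icc a b ×ˢ Icc a b))
    (hF : ∀ x, ContinuousOn (fun p : ℝ × ℝ => F p.1 p.2 x) (Icc a b ×ˢ Icc a b))
    (hV : ∀ x, ContinuousOn (fun p : ℝ × ℝ => V p.1 p.2 x) (Icc a b ×ˢ Icc a b)) :
    ofContinuousOn V hV =
        ofContinuousOn E hE + volterra hab (ofContinuousOn F hF) (ofContinuousOn V hV) ↔
      ∀ x, ∀ s ∈ Icc a b, ∀ t ∈ Icc a b, V t s x = E t s x + ∫ r in s..t, V t r (F r s x) := by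
  have hvolterra (x : X) (p : Icc a b × Icc a b) :
      volterra hab (ofContinuousOn F hF) (ofContinuousOn V hV) x p =
        ∫ r in p.2..p.1, V p.1 r (F r p.2 x) := by
    rw [volterra_apply]
    refine integral_congr fun r hr => ?_
    simp only [integrand, ofContinuousOn_apply,
      projIcc_of_mem hab (uIcc_subset_Icc p.2.2 p.1.2 hr)]
  refine ⟨fun h x s hs t ht => ?_, fun h => ?_⟩
  · rw [← hvolterra x (⟨t, ht⟩, ⟨s, hs⟩)]
    exact congr($h x (⟨t, ht⟩, ⟨s, hs⟩))
  · ext x p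
    simp only [add_apply, ContinuousMap.add_apply, hvolterra]
    exact h x p.2 p.2.2 p.1 p.1.2

end Volterra

end StrongFamily

open StrongFamily in
theorem statement13_general [NormedSpace ℝ Y] [SMulCommClass ℝ 𝕜 Y] [CompleteSpace X]
    [CompleteSpace Y] (hab : a ≤ b) (E : ℝ → ℝ → X →L[𝕜] Y) (F : ℝ → ℝ → X →L[𝕜] X)
    (hE : ∀ x, ContinuousOn (fun p : ℝ × ℝ => E p.1 p.2 x) (Icc a b ×ˢ Icc a b))
    (hF : ∀ x, ContinuousOn (fun p : ℝ × ℝ => F p.1 p.2 x) (Icc a b ×ˢ Icc a b)) :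
    ∃ V : ℝ → ℝ → X →L[𝕜] Y,
      ((∀ x, ContinuousOn (fun p : ℝ × ℝ => V p.1 p.2 x) (Icc a b ×ˢ Icc a b)) ∧
        ∀ x, ∀ s ∈ Icc a b, ∀ t ∈ Icc a b,
          V t s x = E t s x + ∫ r in s..t, V t r (F r s x)) ∧
      ∀ V₂ : ℝ → ℝ → X →L[𝕜] Y,
        ((∀ x, ContinuousOn (fun p : ℝ × ℝ => V₂ p.1 p.2 x) (Icc a b ×ˢ Icc a b)) ∧
          ∀ x, ∀ s ∈ Icc a b, ∀ t ∈ Icc a b,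
            V₂ t s x = E t s x + ∫ r in s..t, V₂ t r (F r s x)) →
        ∀ s ∈ Icc a b, ∀ t ∈ Icc a b, V₂ t s = V t s := by
  obtain ⟨U, hU, hunique⟩ :=
    existsUnique_eq_add_volterra hab (ofContinuousOn F hF) (ofContinuousOn E hE)
  obtain ⟨V, hV, rfl⟩ := exists_ofContinuousOn_eq hab U
  refine ⟨V, ⟨hV, (ofContinuousOn_eq_add_volterra_iff hab hE hF hV).1 hU⟩, ?_⟩
  rintro V₂ ⟨hV₂, heq⟩
  exact ofContinuousOn_eq_iff.1
    (hunique (ofContinuousOn V₂ hV₂) ((ofContinuousOn_eq_add_volterra_iff hab hE hF hV₂).2 heq))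

end StrongFamily

/-- Let `H` be a complex Hilbert space, `T > 0`, and let
`E, F : [0,T] × [0,T] → B(H)` be strongly continuous families of bounded operators (i.e.
`(t,s) ↦ E(t,s)x` and `(t,s) ↦ F(t,s)x` are continuous for every `x ∈ H`). Then there exists
a unique strongly continuous family `V : [0,T] × [0,T] → B(H)` such that for all `x ∈ H`
and all `s, t ∈ [0,T]`, `V(t,s)x = E(t,s)x + ∫_s^t V(t,r)F(r,s)x dr` (Bochner integral). -/
theorem statement13
    {H : Type*} [NormedAddCommGroup H] [InnerProductSpace ℂ H] [CompleteSpace H]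
    (T : ℝ) (hT : 0 < T)
    (E F : ℝ → ℝ → H →L[ℂ] H)
    (hE : ∀ x : H, ContinuousOn (fun p : ℝ × ℝ => E p.1 p.2 x) (Icc 0 T ×ˢ Icc 0 T))
    (hF : ∀ x : H, ContinuousOn (fun p : ℝ × ℝ => F p.1 p.2 x) (Icc 0 T ×ˢ Icc 0 T)) :
    ∃ V : ℝ → ℝ → H →L[ℂ] H,
      ((∀ x : H, ContinuousOn (fun p : ℝ × ℝ => V p.1 p.2 x) (Icc 0 T ×ˢ Icc 0 T)) ∧
        ∀ x : H, ∀ s ∈ Icc (0 : ℝ) T, ∀ t ∈ Icc (0 : ℝ) T,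
          V t s x = E t s x + ∫ r in s..t, V t r (F r s x)) ∧
      ∀ V₂ : ℝ → ℝ → H →L[ℂ] H,
        ((∀ x : H, ContinuousOn (fun p : ℝ × ℝ => V₂ p.1 p.2 x) (Icc 0 T ×ˢ Icc 0 T)) ∧
          ∀ x : H, ∀ s ∈ Icc (0 : ℝ) T, ∀ t ∈ Icc (0 : ℝ) T,
            V₂ t s x = E t s x + ∫ r in s..t, V₂ t r (F r s x)) →
        ∀ s ∈ Icc (0 : ℝ) T, ∀ t ∈ Icc (0 : ℝ) T, V₂ t s = V t s :=
  statement13_general hT.le E F hE hF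
end

section
/- There exists a constant c ∈ ℝ such that for all λ₁, λ₂ ∈ ℝ the following holds, where λ = |λ₁ − λ₂| + 1 and a is the operator on ℂ² given by the diagonal matrix diag(λ₁, λ₂): there exists a twice continuously differentiable family b : [0,1] → B(ℂ²) such that each b(t) is self-adjoint, ‖b(t)‖ ≤ 2 and ‖b'(t)‖ ≤ c·λ for all t ∈ [0,1], b(0) = b(1) = 0, and every differentiable q : [0,1] → B(ℂ²) satisfying q(0) = I and q'(t) = i(a + b(t))q(t) for all t ∈ [0,1] has q(1)e₁ ∈ ℂ·e₂, where e₁, e₂ denote the standard basis vectors of ℂ². -/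
open Set

/-!
The drive is a resonant pulse `b t = f t • e^{ita} s e^{-ita}`, where `s` swaps `e₁` and `e₂`. In
the frame rotating with `e^{ita}` the equation `q' = i(a + b)q` becomes `p' = i f(t) s p`, so
`q t = e^{ita} e^{iθ(t)s}` with `θ' = f`. A pulse of total area `π / 2` therefore gives
`q 1 = e^{ia} (i s)`, because `s * s = 1`. The derivative of `b` involves `a` only through the
commutator of `a` and `s`, which is of size `|λ₁ - λ₂|`.
-/

open NormedSpace

section BanachAlgebra

variable {A : Type*} [NormedRing A] [NormedAlgebra ℝ A]

lemma exp_smul_of_mul_self_eq_neg_one {j : A} (hj : j * j = -1) (θ : ℝ) :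
    exp (θ • j) = Real.cos θ • (1 : A) + Real.sin θ • j := by
  let +nondep : NormedAlgebra ℚ A := .restrictScalars ℚ ℝ A
  have hcont : Continuous (Complex.liftAux j hj) :=
    (Complex.liftAux j hj).toLinearMap.continuous_of_finiteDimensional
  have hmap := map_exp (Complex.liftAux j hj) hcont (θ * Complex.I)
  rw [← Complex.exp_eq_exp_ℂ] at hmap
  simpa [Complex.liftAux_apply, Complex.exp_ofReal_mul_I_re, Complex.exp_ofReal_mul_I_im,
    Algebra.algebraMap_eq_smul_one] using hmap.symm

/-- The orbit `t ↦ e^{tx} y e^{-tx}` of `y` under the one-parameter group of inner automorphisms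
generated by `x`. -/
noncomputable def expConj (x y : A) (t : ℝ) : A :=
  exp (t • x) * y * exp (t • -x)

variable [CompleteSpace A]

lemma exp_smul_mul_exp_smul_neg (x : A) (t : ℝ) : exp (t • x) * exp (t • -x) = 1 := by
  let +nondep : NormedAlgebra ℚ A := .restrictScalars ℚ ℝ A
  rw [smul_neg, ← exp_add_of_commute (Commute.refl _).neg_right, add_neg_cancel, exp_zero]

lemma exp_smul_neg_mul_exp_smul (x : A) (t : ℝ) : exp (t • -x) * exp (t • x) = 1 := by
  simpa only [neg_neg] using exp_smul_mul_exp_smul_neg (-x) t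

lemma contDiff_exp_smul (x : A) {n : WithTop ℕ∞} : ContDiff ℝ n fun t : ℝ => exp (t • x) :=
  (AnalyticOnNhd.contDiff fun y _ => exp_analytic y).comp (contDiff_id.smul contDiff_const)

lemma contDiff_expConj (x y : A) {n : WithTop ℕ∞} : ContDiff ℝ n (expConj x y) :=
  ((contDiff_exp_smul x).mul contDiff_const).mul (contDiff_exp_smul (-x))

lemma hasDerivAt_expConj (x y : A) (t : ℝ) :
    HasDerivAt (expConj x y) (expConj x ⁅x, y⁆ t) t := by
  refine (((hasDerivAt_exp_smul_const x t).mul_const y).mul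
    (hasDerivAt_exp_smul_const' (-x) t)).congr_deriv ?_
  rw [expConj, Ring.lie_def]
  noncomm_ring

/-- The integrating factor `e^{-θy}` makes `e^{-θy} p` constant. -/
lemma eq_exp_smul_mul_of_hasDerivWithinAt {y : A} {f θ : ℝ → ℝ} {p : ℝ → A} {r T : ℝ}
    (hθ : ∀ t ∈ Icc r T, HasDerivWithinAt θ (f t) (Icc r T) t) (hθr : θ r = 0)
    (hp : ∀ t ∈ Icc r T, HasDerivWithinAt p (f t • (y * p t)) (Icc r T) t) :
    ∀ t ∈ Icc r T, p t = exp (θ t • y) * p r := by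
  have hderiv : ∀ t ∈ Icc r T,
      HasDerivWithinAt (fun t => exp (θ t • -y) * p t) 0 (Icc r T) t := by
    intro t ht
    refine (((hasDerivAt_exp_smul_const (-y) (θ t)).scomp_hasDerivWithinAt t (hθ t ht)).mul
      (hp t ht)).congr_deriv ?_
    simp [mul_assoc]
  have hconst : ∀ t ∈ Icc r T, exp (θ t • -y) * p t = p r := by
    intro t ht
    have := constant_of_has_deriv_right_zero (fun t ht => (hderiv t ht).continuousWithinAt)
      (fun t ht => (hderiv t (Ico_subset_Icc_self ht)).mono_of_mem_nhdsWithin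
        (Icc_mem_nhdsGE_of_mem ht)) t ht
    simpa [hθr] using this
  intro t ht
  rw [← hconst t ht, ← mul_assoc, exp_smul_mul_exp_smul_neg, one_mul]

/-- In the rotating frame `p t = e^{-tx} q t` the generator `x` disappears. -/
lemma eq_exp_mul_exp_of_hasDerivWithinAt_expConj {x y : A} {f θ : ℝ → ℝ} {q : ℝ → A} {T : ℝ}
    (hθ : ∀ t ∈ Icc 0 T, HasDerivWithinAt θ (f t) (Icc 0 T) t) (hθ0 : θ 0 = 0) (hq0 : q 0 = 1)
    (hq : ∀ t ∈ Icc 0 T,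
      HasDerivWithinAt q ((x + f t • expConj x y t) * q t) (Icc 0 T) t) :
    ∀ t ∈ Icc 0 T, q t = exp (t • x) * exp (θ t • y) := by
  have hp : ∀ t ∈ Icc 0 T, HasDerivWithinAt (fun t => exp (t • -x) * q t)
      (f t • (y * (exp (t • -x) * q t))) (Icc 0 T) t := by
    intro t ht
    refine ((hasDerivAt_exp_smul_const (-x) t).hasDerivWithinAt.mul (hq t ht)).congr_deriv ?_
    calc exp (t • -x) * -x * q t + exp (t • -x) * ((x + f t • expConj x y t) * q t)
        = f t • (exp (t • -x) * exp (t • x) * (y * (exp (t • -x) * q t))) := by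
          simp only [expConj, add_mul, mul_add, mul_neg, neg_mul, smul_mul_assoc,
            mul_smul_comm, mul_assoc, neg_add_cancel_left]
      _ = f t • (y * (exp (t • -x) * q t)) := by rw [exp_smul_neg_mul_exp_smul, one_mul]
  intro t ht
  have := eq_exp_smul_mul_of_hasDerivWithinAt hθ hθ0 hp t ht
  simp only [zero_smul, exp_zero, hq0, mul_one] at this
  rw [← this, ← mul_assoc, exp_smul_mul_exp_smul_neg, one_mul]

end BanachAlgebra

section StarAlgebra

variable {A : Type*} [NormedRing A] [NormedAlgebra ℝ A] [StarRing A]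

lemma isSelfAdjoint_expConj [StarModule ℝ A] [ContinuousStar A] {x y : A}
    (hx : x ∈ skewAdjoint A) (hy : IsSelfAdjoint y) (t : ℝ) : IsSelfAdjoint (expConj x y t) := by
  have hstar : star x = -x := skewAdjoint.mem_iff.mp hx
  simp [isSelfAdjoint_iff, expConj, star_exp, hstar, hy.star_eq, mul_assoc]

lemma norm_expConj [CompleteSpace A] [StarModule ℝ A] [CStarRing A] {x : A}
    (hx : x ∈ skewAdjoint A) (y : A) (t : ℝ) : ‖expConj x y t‖ = ‖y‖ := by
  let +nondep : NormedAlgebra ℚ A := .restrictScalars ℚ ℝ A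
  have hu : ∀ z ∈ skewAdjoint A, exp (t • z) ∈ unitary A := fun z hz =>
    exp_mem_unitary_of_mem_skewAdjoint (skewAdjoint.smul_mem t hz)
  rw [expConj, CStarRing.norm_mul_mem_unitary _ (hu _ (neg_mem hx)),
    CStarRing.norm_mem_unitary_mul _ (hu _ hx)]

end StarAlgebra

section Pulse

/-- A pulse profile on `[0, 1]` vanishing at both ends, with total area `π / 2`. A quartic is used
because the average `π / 2` leaves little room below the bound `2`: the quadratic profile of the
same area already exceeds it. -/
noncomputable def halfPiPulse (t : ℝ) : ℝ := 5 * Real.pi / 8 * (1 - (2 * t - 1) ^ 4)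

/-- The area of `halfPiPulse` over `[0, t]`. -/
noncomputable def halfPiPulseArea (t : ℝ) : ℝ :=
  5 * Real.pi / 8 * (t - ((2 * t - 1) ^ 5 + 1) / 10)

lemma halfPiPulse_zero : halfPiPulse 0 = 0 := by norm_num [halfPiPulse]

lemma halfPiPulse_one : halfPiPulse 1 = 0 := by norm_num [halfPiPulse]

lemma halfPiPulseArea_zero : halfPiPulseArea 0 = 0 := by norm_num [halfPiPulseArea]

lemma halfPiPulseArea_one : halfPiPulseArea 1 = Real.pi / 2 := by
  rw [halfPiPulseArea]
  ring

lemma contDiff_halfPiPulse {n : WithTop ℕ∞} : ContDiff ℝ n halfPiPulse := by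
  unfold halfPiPulse
  fun_prop

lemma hasDerivAt_two_mul_sub_one (t : ℝ) : HasDerivAt (fun t : ℝ => 2 * t - 1) 2 t := by
  simpa using ((hasDerivAt_id t).const_mul 2).sub_const 1

lemma hasDerivAt_halfPiPulseArea (t : ℝ) : HasDerivAt halfPiPulseArea (halfPiPulse t) t := by
  refine (((hasDerivAt_id t).sub ((((hasDerivAt_two_mul_sub_one t).pow 5).add_const 1).div_const
    10)).const_mul (5 * Real.pi / 8)).congr_deriv ?_
  simp only [halfPiPulse]
  ring

lemma hasDerivAt_halfPiPulse (t : ℝ) :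
    HasDerivAt halfPiPulse (-(5 * Real.pi * (2 * t - 1) ^ 3)) t := by
  refine ((((hasDerivAt_two_mul_sub_one t).pow 4).const_sub 1).const_mul
    (5 * Real.pi / 8)).congr_deriv ?_
  ring

lemma abs_two_mul_sub_one_le {t : ℝ} (ht : t ∈ Icc (0 : ℝ) 1) : |2 * t - 1| ≤ 1 :=
  abs_le.2 ⟨by linarith [ht.1], by linarith [ht.2]⟩

lemma abs_halfPiPulse_le {t : ℝ} (ht : t ∈ Icc (0 : ℝ) 1) : |halfPiPulse t| ≤ 2 := by
  have hle : (2 * t - 1) ^ 4 ≤ 1 := by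
    rw [← Even.pow_abs (by decide)]
    exact pow_le_one₀ (abs_nonneg _) (abs_two_mul_sub_one_le ht)
  have hnonneg : 0 ≤ (2 * t - 1) ^ 4 := by positivity
  rw [halfPiPulse, abs_of_nonneg (mul_nonneg (by positivity) (by linarith))]
  nlinarith [Real.pi_pos, Real.pi_lt_d2]

lemma abs_deriv_halfPiPulse_le {t : ℝ} (ht : t ∈ Icc (0 : ℝ) 1) :
    |deriv halfPiPulse t| ≤ 5 * Real.pi := by
  rw [(hasDerivAt_halfPiPulse t).deriv, abs_neg, abs_mul, abs_pow,
    abs_of_pos (by positivity : 0 < 5 * Real.pi)]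
  exact mul_le_of_le_one_right (by positivity)
    (pow_le_one₀ (abs_nonneg _) (abs_two_mul_sub_one_le ht))

end Pulse

section ResonantDrive

variable {A : Type*} [NormedRing A] [NormedAlgebra ℂ A]

/-- The perturbation of the Hamiltonian `a` that acts, in the frame rotating with `e^{ita}`, as the
fixed operator `s` modulated by `halfPiPulse`. -/
noncomputable def resonantDrive (a s : A) (t : ℝ) : A :=
  halfPiPulse t • expConj (Complex.I • a) s t

lemma resonantDrive_zero (a s : A) : resonantDrive a s 0 = 0 := by
  rw [resonantDrive, halfPiPulse_zero, zero_smul]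

lemma resonantDrive_one (a s : A) : resonantDrive a s 1 = 0 := by
  rw [resonantDrive, halfPiPulse_one, zero_smul]

lemma isSelfAdjoint_resonantDrive [StarRing A] [StarModule ℂ A] [ContinuousStar A] {a s : A}
    (ha : IsSelfAdjoint a) (hs : IsSelfAdjoint s) (t : ℝ) :
    IsSelfAdjoint (resonantDrive a s t) :=
  IsSelfAdjoint.smul (.all (halfPiPulse t))
    (isSelfAdjoint_expConj (ha.smul_mem_skewAdjoint Complex.conj_I) hs t)

variable [CompleteSpace A]

lemma contDiff_resonantDrive (a s : A) {n : WithTop ℕ∞} : ContDiff ℝ n (resonantDrive a s) :=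
  contDiff_halfPiPulse.smul (contDiff_expConj _ s)

lemma deriv_resonantDrive (a s : A) (t : ℝ) :
    deriv (resonantDrive a s) t =
      halfPiPulse t • expConj (Complex.I • a) ⁅Complex.I • a, s⁆ t +
        deriv halfPiPulse t • expConj (Complex.I • a) s t :=
  ((hasDerivAt_halfPiPulse t).differentiableAt.hasDerivAt.smul (hasDerivAt_expConj _ s t)).deriv

theorem eq_exp_mul_of_hasDerivWithinAt_resonantDrive {a s : A} (hs : s * s = 1) {q : ℝ → A}
    (hq0 : q 0 = 1)
    (hq : ∀ t ∈ Icc (0 : ℝ) 1,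
      HasDerivWithinAt q (Complex.I • ((a + resonantDrive a s t) * q t)) (Icc 0 1) t) :
    q 1 = exp (Complex.I • a) * (Complex.I • s) := by
  have hj : (Complex.I • s) * (Complex.I • s) = -1 := by
    rw [smul_mul_smul_comm, Complex.I_mul_I, hs, neg_one_smul]
  have hq' : ∀ t ∈ Icc (0 : ℝ) 1, HasDerivWithinAt q ((Complex.I • a +
      halfPiPulse t • expConj (Complex.I • a) (Complex.I • s) t) * q t) (Icc 0 1) t := by
    intro t ht
    refine (hq t ht).congr_deriv ?_
    simp only [resonantDrive, expConj, smul_mul_assoc, mul_smul_comm, add_mul, smul_add,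
      smul_comm (halfPiPulse t) Complex.I]
  have hq1 := eq_exp_mul_exp_of_hasDerivWithinAt_expConj
    (fun t _ => (hasDerivAt_halfPiPulseArea t).hasDerivWithinAt) halfPiPulseArea_zero hq0 hq' 1
    (right_mem_Icc.2 zero_le_one)
  rwa [halfPiPulseArea_one, exp_smul_of_mul_self_eq_neg_one hj, Real.cos_pi_div_two,
    Real.sin_pi_div_two, zero_smul, zero_add, one_smul, one_smul] at hq1

variable [StarRing A] [StarModule ℂ A] [CStarRing A] {a : A}

lemma norm_resonantDrive_le (ha : IsSelfAdjoint a) (s : A) {t : ℝ} (ht : t ∈ Icc (0 : ℝ) 1) :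
    ‖resonantDrive a s t‖ ≤ 2 * ‖s‖ := by
  rw [resonantDrive, norm_smul, norm_expConj (ha.smul_mem_skewAdjoint Complex.conj_I)]
  exact mul_le_mul_of_nonneg_right (abs_halfPiPulse_le ht) (norm_nonneg s)

lemma norm_deriv_resonantDrive_le (ha : IsSelfAdjoint a) (s : A) {t : ℝ}
    (ht : t ∈ Icc (0 : ℝ) 1) :
    ‖deriv (resonantDrive a s) t‖ ≤ 2 * ‖⁅a, s⁆‖ + 5 * Real.pi * ‖s‖ := by
  have hskew := ha.smul_mem_skewAdjoint Complex.conj_I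
  have hlie : ‖⁅Complex.I • a, s⁆‖ = ‖⁅a, s⁆‖ := by
    rw [Ring.lie_def, Ring.lie_def, smul_mul_assoc, mul_smul_comm, ← smul_sub, norm_smul,
      Complex.norm_I, one_mul]
  rw [deriv_resonantDrive]
  refine (norm_add_le _ _).trans ?_
  rw [norm_smul, norm_smul, norm_expConj hskew, norm_expConj hskew, hlie]
  exact add_le_add (mul_le_mul_of_nonneg_right (abs_halfPiPulse_le ht) (norm_nonneg _))
    (mul_le_mul_of_nonneg_right (abs_deriv_halfPiPulse_le ht) (norm_nonneg _))

end ResonantDrive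

section TwoLevel

open Matrix

section RCLike

variable {𝕜 : Type*} [RCLike 𝕜]

lemma exp_apply_of_apply_eq_smul {E : Type*} [NormedAddCommGroup E] [NormedSpace 𝕜 E]
    [CompleteSpace E] {x : E →L[𝕜] E} {v : E} {μ : 𝕜} (h : x v = μ • v) :
    exp x v = exp μ • v := by
  have hpow : ∀ n : ℕ, (x ^ n) v = μ ^ n • v := by
    intro n
    induction n with
    | zero => simp
    | succ n ih => rw [pow_succ, mul_apply_eq_comp, h, map_smul, ih, smul_smul, pow_succ']
  have hx := (exp_series_hasSum_exp' (𝕂 := 𝕜) x).mapL (ContinuousLinearMap.apply 𝕜 E v)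
  have hμ := (exp_series_hasSum_exp' (𝕂 := 𝕜) μ).smul_const v
  refine hx.unique (hμ.congr_fun ?_)
  simp [hpow, smul_smul]

variable {ι : Type*} [Fintype ι] [DecidableEq ι]

lemma toEuclideanCLM_diagonal_single (d : ι → 𝕜) (i : ι) :
    toEuclideanCLM (𝕜 := 𝕜) (diagonal d) (EuclideanSpace.single i 1) =
      d i • EuclideanSpace.single i (1 : 𝕜) := by
  ext k
  simp [ofLp_toEuclideanCLM, Pi.single_apply]

lemma isSelfAdjoint_toEuclideanCLM_diagonal {d : ι → 𝕜} (hd : IsSelfAdjoint d) :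
    IsSelfAdjoint (toEuclideanCLM (𝕜 := 𝕜) (diagonal d)) :=
  IsSelfAdjoint.map (isHermitian_diagonal_of_self_adjoint d hd) _

end RCLike

/-- The operator on `ℂ²` exchanging the two standard basis vectors. -/
noncomputable def basisSwap : EuclideanSpace ℂ (Fin 2) →L[ℂ] EuclideanSpace ℂ (Fin 2) :=
  toEuclideanCLM (𝕜 := ℂ) !![0, 1; 1, 0]

lemma isSelfAdjoint_basisSwap : IsSelfAdjoint basisSwap := by
  refine IsSelfAdjoint.map ?_ _
  ext i j
  fin_cases i <;> fin_cases j <;> simp [star_apply]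

lemma basisSwap_mul_self : basisSwap * basisSwap = 1 := by
  rw [basisSwap, ← map_mul, ← map_one (toEuclideanCLM (n := Fin 2) (𝕜 := ℂ))]
  congr 1
  ext i j
  fin_cases i <;> fin_cases j <;> simp

lemma norm_basisSwap : ‖basisSwap‖ = 1 := by
  refine CStarRing.norm_of_mem_unitary (Unitary.mem_iff.2 ?_)
  rw [isSelfAdjoint_basisSwap.star_eq, basisSwap_mul_self, and_self]

lemma basisSwap_single_zero :
    basisSwap (EuclideanSpace.single 0 1) = EuclideanSpace.single 1 (1 : ℂ) := by
  ext k
  fin_cases k <;> simp [basisSwap, ofLp_toEuclideanCLM]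

lemma norm_lie_diagonal_basisSwap_le (d₁ d₂ : ℂ) :
    ‖⁅toEuclideanCLM (𝕜 := ℂ) (diagonal ![d₁, d₂]), basisSwap⁆‖ ≤ ‖d₁ - d₂‖ := by
  have hlie : ⁅toEuclideanCLM (𝕜 := ℂ) (diagonal ![d₁, d₂]), basisSwap⁆ =
      toEuclideanCLM (𝕜 := ℂ) (diagonal ![d₁ - d₂, d₂ - d₁]) * basisSwap := by
    rw [Ring.lie_def, basisSwap, ← map_mul, ← map_mul, ← map_mul, ← map_sub]
    congr 1
    ext i j
    rw [Matrix.sub_apply, diagonal_mul, mul_diagonal, diagonal_mul]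
    fin_cases i <;> fin_cases j <;> simp
  have hdiag : ‖toEuclideanCLM (𝕜 := ℂ) (diagonal ![d₁ - d₂, d₂ - d₁])‖ ≤ ‖d₁ - d₂‖ := by
    rw [l2_opNorm_toEuclideanCLM, l2_opNorm_diagonal, pi_norm_le_iff_of_nonneg (norm_nonneg _)]
    intro i
    fin_cases i <;> simp [norm_sub_rev]
  calc _ = ‖toEuclideanCLM (𝕜 := ℂ) (diagonal ![d₁ - d₂, d₂ - d₁]) * basisSwap‖ := by rw [hlie]
    _ ≤ ‖d₁ - d₂‖ * 1 := (norm_mul_le _ _).trans (by rw [norm_basisSwap]; gcongr)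
    _ = ‖d₁ - d₂‖ := mul_one _

lemma apply_single_zero_of_hasDerivWithinAt_resonantDrive
    {a : EuclideanSpace ℂ (Fin 2) →L[ℂ] EuclideanSpace ℂ (Fin 2)} {ν : ℂ}
    (ha : a (EuclideanSpace.single 1 1) = ν • EuclideanSpace.single 1 (1 : ℂ))
    {q : ℝ → EuclideanSpace ℂ (Fin 2) →L[ℂ] EuclideanSpace ℂ (Fin 2)} (hq0 : q 0 = 1)
    (hq : ∀ t ∈ Icc (0 : ℝ) 1, HasDerivWithinAt q
      (Complex.I • (a + resonantDrive a basisSwap t).comp (q t)) (Icc 0 1) t) :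
    q 1 (EuclideanSpace.single 0 1) =
      (Complex.I * exp (Complex.I * ν)) • EuclideanSpace.single 1 (1 : ℂ) := by
  have hexp : exp (Complex.I • a) (EuclideanSpace.single 1 1) =
      exp (Complex.I * ν) • EuclideanSpace.single 1 (1 : ℂ) :=
    exp_apply_of_apply_eq_smul (by rw [_root_.smul_apply, ha, smul_smul])
  have hq1 : q 1 = exp (Complex.I • a) * (Complex.I • basisSwap) :=
    eq_exp_mul_of_hasDerivWithinAt_resonantDrive (a := a) (q := q) basisSwap_mul_self hq0 hq
  rw [hq1, mul_smul_comm, _root_.smul_apply, mul_apply_eq_comp, basisSwap_single_zero, hexp,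
    smul_smul]

end TwoLevel

/-- There exists a constant `c ∈ ℝ` such that for all `λ₁, λ₂ ∈ ℝ` the
following holds, where `λ = |λ₁ − λ₂| + 1` and `a` is the operator on `ℂ²` given by the
diagonal matrix `diag(λ₁, λ₂)`: there exists a twice continuously differentiable family
`b : [0,1] → B(ℂ²)` such that each `b(t)` is self-adjoint, `‖b(t)‖ ≤ 2` and `‖b'(t)‖ ≤ c·λ`
for all `t ∈ [0,1]`, `b(0) = b(1) = 0`, and every differentiable `q : [0,1] → B(ℂ²)`
satisfying `q(0) = I` and `q'(t) = i(a + b(t))q(t)` for all `t ∈ [0,1]` has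
`q(1)e₁ ∈ ℂ·e₂`. -/
theorem statement19 :
    ∃ c : ℝ, ∀ lam₁ lam₂ : ℝ,
      ∃ b b' b'' : ℝ → EuclideanSpace ℂ (Fin 2) →L[ℂ] EuclideanSpace ℂ (Fin 2),
        (∀ t ∈ Icc (0 : ℝ) 1, HasDerivWithinAt b (b' t) (Icc (0 : ℝ) 1) t) ∧
        (∀ t ∈ Icc (0 : ℝ) 1, HasDerivWithinAt b' (b'' t) (Icc (0 : ℝ) 1) t) ∧
        ContinuousOn b'' (Icc (0 : ℝ) 1) ∧
        (∀ t ∈ Icc (0 : ℝ) 1, IsSelfAdjoint (b t)) ∧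
        (∀ t ∈ Icc (0 : ℝ) 1, ‖b t‖ ≤ 2) ∧
        (∀ t ∈ Icc (0 : ℝ) 1, ‖b' t‖ ≤ c * (|lam₁ - lam₂| + 1)) ∧
        b 0 = 0 ∧ b 1 = 0 ∧
        ∀ q : ℝ → EuclideanSpace ℂ (Fin 2) →L[ℂ] EuclideanSpace ℂ (Fin 2),
          q 0 = 1 →
          (∀ t ∈ Icc (0 : ℝ) 1,
            HasDerivWithinAt q
              (Complex.I •
                ((Matrix.toEuclideanCLM (𝕜 := ℂ)
                    (Matrix.diagonal ![(lam₁ : ℂ), (lam₂ : ℂ)]) + b t).comp (q t)))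
              (Icc (0 : ℝ) 1) t) →
          ∃ μ : ℂ,
            q 1 (EuclideanSpace.single (0 : Fin 2) (1 : ℂ)) =
              μ • EuclideanSpace.single (1 : Fin 2) (1 : ℂ) := by
  refine ⟨5 * Real.pi, fun l₁ l₂ => ?_⟩
  let a : EuclideanSpace ℂ (Fin 2) →L[ℂ] EuclideanSpace ℂ (Fin 2) :=
    Matrix.toEuclideanCLM (𝕜 := ℂ) (Matrix.diagonal ![(l₁ : ℂ), (l₂ : ℂ)])
  let b := resonantDrive a basisSwap
  have ha : IsSelfAdjoint a :=
    isSelfAdjoint_toEuclideanCLM_diagonal (funext fun i => by fin_cases i <;> simp)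
  have hb : ContDiff ℝ 2 b := contDiff_resonantDrive a basisSwap
  have hb' : ContDiff ℝ 1 (deriv b) := hb.deriv'
  refine ⟨b, deriv b, deriv (deriv b),
    fun t _ => (hb.differentiable two_ne_zero t).hasDerivAt.hasDerivWithinAt,
    fun t _ => (hb'.differentiable one_ne_zero t).hasDerivAt.hasDerivWithinAt,
    (hb'.continuous_deriv le_rfl).continuousOn,
    fun t _ => isSelfAdjoint_resonantDrive ha isSelfAdjoint_basisSwap t,
    fun t ht => ?_, fun t ht => ?_, resonantDrive_zero _ _, resonantDrive_one _ _,
    fun q hq0 hq => ⟨_, apply_single_zero_of_hasDerivWithinAt_resonantDrive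
      (toEuclideanCLM_diagonal_single _ 1) hq0 hq⟩⟩
  · simpa [norm_basisSwap] using norm_resonantDrive_le ha basisSwap ht
  · have hlie : ‖⁅a, basisSwap⁆‖ ≤ |l₁ - l₂| := by
      exact_mod_cast norm_lie_diagonal_basisSwap_le l₁ l₂
    have hderiv := norm_deriv_resonantDrive_le ha basisSwap ht
    rw [norm_basisSwap] at hderiv
    nlinarith [Real.pi_gt_three, abs_nonneg (l₁ - l₂)]
end
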